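/- Let 2 < p ≤ 4. Assume condition (LD2) holds and |N(B_i)| ≤ κ for every i ∈ 𝒥, where N(B_i) = {j ∈ 𝒥 : B_j ∩ B_i ≠ ∅}. Then sup_{z∈ℝ} |F(z) − Φ(z)| ≤ (13 + 11κ) Σ_{i∈𝒥} (E|X_i|^{3∧p} + E|Y_i|^{3∧p}) + 2.5 (κ Σ_{i∈𝒥} (E|X_i|^p + E|Y_i|^p))^{1/2}. -/

import Mathlib

open MeasureTheory ProbabilityTheory Real

noncomputable def stdGaussianCDF : ℝ → ℝ :=
  fun z => ∫ x in Set.Iic z, (Real.sqrt (2 * Real.pi))⁻¹ * Real.exp (-x ^ 2 / 2)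

/-!
Stein's method with a smoothed indicator and a self-bounding inequality for `δ = sup |F - Φ|`.
Let `h` be the indicator of `(-∞, z]`, smoothed over a width `α`, and let `f` solve Stein's equation
`f' w = w f w + h w - ∫ h` for the standard normal law. As `Xᵢ` is independent of `W - Yᵢ`,
`E W f(W) = ∑ E Xᵢ (f(W) - f(W - Yᵢ))`, and expanding `f` at `W`, with `Yᵢ` truncated to `[-1, 1]`,
bounds `|E h(W) - ∫ h|` by three terms. The first is `E|1 - ∑ Xᵢ Yᵢ|`, where `∑ E Xᵢ Yᵢ = 1` and
(LD2) controls the variance of the truncated products. The second is a Taylor remainder. The third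
is made of increments of `h` over distances at most one: since `F` is within `δ` of `Φ`,
`|F(x + s) - F(x)| ≤ 0.4 |s| + 2 δ`, which turns it into an expression in `δ`. With `α` just above
eight times the sum of the lower moments, `δ` is at most a fraction of itself plus the claimed
bound.
-/

section Gaussian

lemma sqrt_two_mul_pi_mem_Icc : √(2 * π) ∈ Set.Icc 2.5 2.6 := by
  constructor
  · exact Real.le_sqrt_of_sq_le (by linarith [Real.pi_gt_d2])
  · exact (Real.sqrt_le_left (by norm_num)).2 (by linarith [Real.pi_lt_d2])

lemma gaussianPDFReal_zero_one (x : ℝ) :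
    gaussianPDFReal 0 1 x = (√(2 * π))⁻¹ * exp (-x ^ 2 / 2) := by
  simp [gaussianPDFReal_def]

lemma gaussianPDFReal_zero_one_le (x : ℝ) : gaussianPDFReal 0 1 x ≤ 0.4 := by
  have hsqrt : (√(2 * π))⁻¹ ≤ 0.4 :=
    inv_le_of_inv_le₀ (by norm_num) (le_trans (by norm_num) sqrt_two_mul_pi_mem_Icc.1)
  have hexp : exp (-x ^ 2 / 2) ≤ 1 := exp_le_one_iff.2 (by linarith [sq_nonneg x])
  rw [gaussianPDFReal_zero_one]
  exact (mul_le_of_le_one_right (by positivity) hexp).trans hsqrt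

lemma hasDerivAt_gaussianPDFReal_zero_one (x : ℝ) :
    HasDerivAt (gaussianPDFReal 0 1) (-x * gaussianPDFReal 0 1 x) x := by
  have hexponent : HasDerivAt (fun y : ℝ => -y ^ 2 / 2) (-x) x :=
    ((hasDerivAt_pow 2 x).fun_neg.div_const 2).congr_deriv (by push_cast; ring)
  rw [funext gaussianPDFReal_zero_one]
  exact (hexponent.exp.const_mul _).congr_deriv (by ring)

lemma setIntegral_gaussianReal (m : ℝ) {v : NNReal} (hv : v ≠ 0) (g : ℝ → ℝ) {s : Set ℝ}
    (hs : MeasurableSet s) :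
    ∫ x in s, g x ∂gaussianReal m v = ∫ x in s, gaussianPDFReal m v x * g x := by
  rw [← integral_indicator hs, ← integral_indicator hs, integral_gaussianReal_eq_integral_smul hv]
  congr with x
  by_cases hx : x ∈ s <;> simp [hx]

lemma measureReal_gaussianReal (m : ℝ) {v : NNReal} (hv : v ≠ 0) {s : Set ℝ}
    (hs : MeasurableSet s) :
    (gaussianReal m v).real s = ∫ x in s, gaussianPDFReal m v x := by
  simpa using setIntegral_gaussianReal m hv (fun _ => 1) hs

lemma stdGaussianCDF_eq_cdf : stdGaussianCDF = cdf (gaussianReal 0 1) := by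
  ext z
  rw [cdf_eq_real, measureReal_gaussianReal 0 one_ne_zero measurableSet_Iic]
  simp only [stdGaussianCDF, gaussianPDFReal_zero_one]

lemma abs_cdf_gaussianReal_sub_le (x s : ℝ) :
    |cdf (gaussianReal 0 1) (x + s) - cdf (gaussianReal 0 1) x| ≤ 0.4 * |s| := by
  have hint (a : ℝ) := (integrable_gaussianPDFReal 0 1).integrableOn (s := Set.Iic a)
  simp only [cdf_eq_real, measureReal_gaussianReal 0 one_ne_zero measurableSet_Iic]
  rw [intervalIntegral.integral_Iic_sub_Iic (hint x) (hint (x + s))]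
  have hbound := intervalIntegral.norm_integral_le_of_norm_le_const (a := x) (b := x + s)
    (f := gaussianPDFReal 0 1) (C := 0.4) fun y _ => by
      rw [norm_of_nonneg (gaussianPDFReal_nonneg 0 1 y)]
      exact gaussianPDFReal_zero_one_le y
  rwa [add_sub_cancel_left] at hbound

lemma gaussianReal_real_Ici_le {w : ℝ} (hw : 0 ≤ w) :
    (gaussianReal 0 1).real (Set.Ici w) ≤ √(2 * π) * gaussianPDFReal 0 1 w := by
  have hsubgaussian : HasSubgaussianMGF (fun x : ℝ => x) 1 (gaussianReal 0 1) :=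
    ⟨fun t => integrable_exp_mul_gaussianReal t, fun t => by simp [mgf_fun_id_gaussianReal]⟩
  have hsqrt : √(2 * π) ≠ 0 := by positivity
  refine (hsubgaussian.measure_ge_le hw).trans_eq ?_
  rw [gaussianPDFReal_zero_one, mul_inv_cancel_left₀ hsqrt]
  simp

lemma mul_gaussianReal_real_Ici_le {w : ℝ} (hw : 0 ≤ w) :
    w * (gaussianReal 0 1).real (Set.Ici w) ≤ gaussianPDFReal 0 1 w := by
  have hderiv (x : ℝ) : HasDerivAt (fun y => -gaussianPDFReal 0 1 y)
      (gaussianPDFReal 0 1 x * x) x :=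
    (hasDerivAt_gaussianPDFReal_zero_one x).fun_neg.congr_deriv (by ring)
  have hlim : Filter.Tendsto (fun x => -gaussianPDFReal 0 1 x) Filter.atTop (nhds (-0)) := by
    have hexponent : Filter.Tendsto (fun x : ℝ => -x ^ 2 / 2) Filter.atTop Filter.atBot :=
      (Filter.tendsto_neg_atBot_iff.2 (Filter.tendsto_pow_atTop two_ne_zero)).atBot_div_const
        two_pos
    simpa [gaussianPDFReal_zero_one] using
      ((tendsto_exp_atBot.comp hexponent).const_mul (√(2 * π))⁻¹).neg
  have hnonneg : ∀ x ∈ Set.Ioi w, 0 ≤ gaussianPDFReal 0 1 x * x := fun x hx =>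
    mul_nonneg (gaussianPDFReal_nonneg 0 1 x) (hw.trans hx.le)
  have hint := integrableOn_Ioi_deriv_of_nonneg' (fun x _ => hderiv x) hnonneg hlim
  rw [measureReal_gaussianReal 0 one_ne_zero measurableSet_Ici, integral_Ici_eq_integral_Ioi,
    ← integral_const_mul]
  calc ∫ x in Set.Ioi w, w * gaussianPDFReal 0 1 x
      ≤ ∫ x in Set.Ioi w, gaussianPDFReal 0 1 x * x := by
        refine setIntegral_mono_on ((integrable_gaussianPDFReal 0 1).integrableOn.const_mul w)
          hint measurableSet_Ioi fun x hx => ?_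
        rw [mul_comm]
        exact mul_le_mul_of_nonneg_left hx.le (gaussianPDFReal_nonneg 0 1 x)
    _ = gaussianPDFReal 0 1 w := by
        rw [integral_Ioi_of_hasDerivAt_of_nonneg' (fun x _ => hderiv x) hnonneg hlim]
        ring

lemma gaussianReal_real_Iic_eq_Ici_neg (w : ℝ) :
    (gaussianReal 0 1).real (Set.Iic w) = (gaussianReal 0 1).real (Set.Ici (-w)) := by
  conv_lhs => rw [← neg_zero, ← gaussianReal_map_neg]
  rw [map_measureReal_apply measurable_neg measurableSet_Iic]
  simp

end Gaussian

section SteinSolution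

/-- The bounded solution `f` of Stein's equation `f' w = w * f w + h w - ∫ h` for the standard
normal law. -/
noncomputable def steinSolution (h : ℝ → ℝ) (w : ℝ) : ℝ :=
  (gaussianPDFReal 0 1 w)⁻¹ * ∫ x in Set.Iic w, (h x - ∫ y, h y ∂gaussianReal 0 1) ∂gaussianReal 0 1

/-- The derivative of `steinSolution h`, namely the right-hand side of Stein's equation. -/
noncomputable def steinDeriv (h : ℝ → ℝ) (w : ℝ) : ℝ :=
  w * steinSolution h w + h w - ∫ x, h x ∂gaussianReal 0 1

lemma integrable_of_mem_Icc {α : Type*} [MeasurableSpace α] {ν : Measure α} [IsFiniteMeasure ν]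
    {g : α → ℝ} (hg : Measurable g) (hg01 : ∀ x, g x ∈ Set.Icc 0 1) : Integrable g ν :=
  .of_bound hg.aestronglyMeasurable 1 (ae_of_all _ fun x => by
    rw [norm_of_nonneg (hg01 x).1]; exact (hg01 x).2)

variable {h : ℝ → ℝ}

lemma setIntegral_sub_integral_mem_Icc {α : Type*} [MeasurableSpace α] {ν : Measure α}
    [IsFiniteMeasure ν] {g : α → ℝ} (hg : Measurable g) (hg01 : ∀ x, g x ∈ Set.Icc 0 1)
    (m : ℝ) (s : Set α) :
    ∫ x in s, (g x - m) ∂ν ∈ Set.Icc (-m * ν.real s) ((1 - m) * ν.real s) := by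
  have hint : Integrable (fun x => g x - m) ν :=
    (integrable_of_mem_Icc hg hg01).sub (integrable_const m)
  constructor
  · calc -m * ν.real s = ∫ _ in s, -m ∂ν := by simp [mul_comm]
      _ ≤ _ := integral_mono (integrable_const _) hint.integrableOn fun x => by
        simpa using (hg01 x).1
  · calc ∫ x in s, (g x - m) ∂ν ≤ ∫ _ in s, (1 - m) ∂ν :=
        integral_mono hint.integrableOn (integrable_const _) fun x => by
          simpa using (hg01 x).2
      _ = _ := by simp [mul_comm]

lemma integral_mem_Icc {α : Type*} [MeasurableSpace α] {ν : Measure α} [IsProbabilityMeasure ν]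
    {g : α → ℝ} (hg : Measurable g) (hg01 : ∀ x, g x ∈ Set.Icc 0 1) :
    ∫ x, g x ∂ν ∈ Set.Icc 0 1 := by
  simpa using setIntegral_sub_integral_mem_Icc (ν := ν) hg hg01 0 Set.univ

lemma hasDerivAt_setIntegral_Iic {g : ℝ → ℝ} (hg : Continuous g) (hint : Integrable g) (w : ℝ) :
    HasDerivAt (fun w => ∫ x in Set.Iic w, g x) (g w) w := by
  have hsplit : (fun w => ∫ x in Set.Iic w, g x) =
      fun w => (∫ x in Set.Iic 0, g x) + ∫ x in (0 : ℝ)..w, g x := by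
    ext w
    rw [← intervalIntegral.integral_Iic_sub_Iic hint.integrableOn hint.integrableOn]
    ring
  rw [hsplit]
  exact (intervalIntegral.integral_hasDerivAt_right hint.intervalIntegrable
    (hg.stronglyMeasurableAtFilter _ _) hg.continuousAt).const_add _

lemma hasDerivAt_steinSolution (hc : Continuous h) (hint : Integrable h (gaussianReal 0 1))
    (w : ℝ) : HasDerivAt (steinSolution h) (steinDeriv h w) w := by
  set m := ∫ x, h x ∂gaussianReal 0 1 with hm
  have hpdf : gaussianPDFReal 0 1 w ≠ 0 := (gaussianPDFReal_pos 0 1 w one_ne_zero).ne'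
  have hint' : Integrable fun x => gaussianPDFReal 0 1 x * (h x - m) := by
    have := hint.sub (integrable_const m)
    rw [gaussianReal_of_var_ne_zero 0 one_ne_zero, integrable_withDensity_iff
      (measurable_gaussianPDF 0 1) (ae_of_all _ fun _ => gaussianPDF_lt_top)] at this
    simpa only [toReal_gaussianPDF, mul_comm, Pi.sub_apply] using this
  have hpdf_cont : Continuous (gaussianPDFReal 0 1) :=
    continuous_iff_continuousAt.2 fun x => (hasDerivAt_gaussianPDFReal_zero_one x).continuousAt
  have hderiv := ((hasDerivAt_gaussianPDFReal_zero_one w).fun_inv hpdf).mul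
    (hasDerivAt_setIntegral_Iic (by fun_prop) hint' w)
  have hstein : steinSolution h = (fun w => (gaussianPDFReal 0 1 w)⁻¹) *
      fun w => ∫ x in Set.Iic w, gaussianPDFReal 0 1 x * (h x - m) := by
    ext w
    simp only [steinSolution, setIntegral_gaussianReal 0 one_ne_zero _ measurableSet_Iic,
      Pi.mul_apply, hm]
  rw [steinDeriv, hstein]
  refine hderiv.congr_deriv ?_
  simp only [Pi.mul_apply, ← hm]
  field_simp
  ring

/- The two sides of the tail are exchanged by `∫ (h - m) = 0`. -/
lemma setIntegral_Iic_sub_integral_mem_Icc (hh : Measurable h) (h01 : ∀ x, h x ∈ Set.Icc 0 1)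
    (w : ℝ) :
    let m := ∫ x, h x ∂gaussianReal 0 1
    let I := ∫ x in Set.Iic w, (h x - m) ∂gaussianReal 0 1
    let T := (gaussianReal 0 1).real (Set.Ici |w|)
    (0 ≤ w → -I ∈ Set.Icc (-m * T) ((1 - m) * T)) ∧
      (w ≤ 0 → I ∈ Set.Icc (-m * T) ((1 - m) * T)) := by
  intro m I T
  refine ⟨fun hw => ?_, fun hw => ?_⟩
  · have hint : Integrable (fun x => h x - m) (gaussianReal 0 1) :=
      (integrable_of_mem_Icc hh h01).sub (integrable_const m)
    have hzero : ∫ x, (h x - m) ∂gaussianReal 0 1 = 0 := by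
      rw [integral_sub (integrable_of_mem_Icc hh h01) (integrable_const m)]
      simp [m]
    have hsplit := intervalIntegral.integral_Iic_add_Ioi (b := w) hint.integrableOn
      hint.integrableOn
    have := nullSingletonClass_gaussianReal (μ := 0) (v := 1) one_ne_zero
    rw [hzero, ← integral_Ici_eq_integral_Ioi] at hsplit
    rw [← eq_neg_of_add_eq_zero_right hsplit]
    simpa only [T, abs_of_nonneg hw] using setIntegral_sub_integral_mem_Icc hh h01 m (Set.Ici w)
  · simpa only [T, abs_of_nonpos hw, gaussianReal_real_Iic_eq_Ici_neg] using
      setIntegral_sub_integral_mem_Icc (ν := gaussianReal 0 1) hh h01 m (Set.Iic w)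

lemma abs_steinSolution_le (hh : Measurable h) (h01 : ∀ x, h x ∈ Set.Icc 0 1) (w : ℝ) :
    |steinSolution h w| ≤ √(2 * π) := by
  obtain ⟨hpos, hneg⟩ := setIntegral_Iic_sub_integral_mem_Icc hh h01 w
  obtain ⟨hm0, hm1⟩ := integral_mem_Icc (ν := gaussianReal 0 1) hh h01
  have htail := gaussianReal_real_Ici_le (abs_nonneg w)
  have hpdf_abs : gaussianPDFReal 0 1 |w| = gaussianPDFReal 0 1 w := by
    simp only [gaussianPDFReal_zero_one, sq_abs]
  have hpdf := gaussianPDFReal_pos 0 1 w one_ne_zero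
  have hT := measureReal_nonneg (μ := gaussianReal 0 1) (s := Set.Ici |w|)
  rw [steinSolution, abs_mul, abs_inv, abs_of_pos hpdf, inv_mul_le_iff₀ hpdf, mul_comm,
    ← hpdf_abs]
  refine le_trans ?_ htail
  rcases le_total 0 w with hw | hw
  · obtain ⟨hlo, hhi⟩ := hpos hw
    rw [abs_le]
    constructor <;> nlinarith
  · obtain ⟨hlo, hhi⟩ := hneg hw
    rw [abs_le]
    constructor <;> nlinarith

lemma abs_steinDeriv_le_one (hh : Measurable h) (h01 : ∀ x, h x ∈ Set.Icc 0 1) (w : ℝ) :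
    |steinDeriv h w| ≤ 1 := by
  obtain ⟨hpos, hneg⟩ := setIntegral_Iic_sub_integral_mem_Icc hh h01 w
  obtain ⟨hm0, hm1⟩ := integral_mem_Icc (ν := gaussianReal 0 1) hh h01
  have hmills := mul_gaussianReal_real_Ici_le (abs_nonneg w)
  have hpdf_abs : gaussianPDFReal 0 1 |w| = gaussianPDFReal 0 1 w := by
    simp only [gaussianPDFReal_zero_one, sq_abs]
  have hpdf := gaussianPDFReal_pos 0 1 w one_ne_zero
  set m := ∫ x, h x ∂gaussianReal 0 1
  set T := (gaussianReal 0 1).real (Set.Ici |w|)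
  set I := ∫ x in Set.Iic w, (h x - m) ∂gaussianReal 0 1
  have hwI : w * steinSolution h w ∈ Set.Icc (-(1 - m)) m := by
    have hform : w * steinSolution h w = w * I / gaussianPDFReal 0 1 w := by
      simp only [steinSolution, I, m]
      ring
    rw [hform, Set.mem_Icc, le_div_iff₀ hpdf, div_le_iff₀ hpdf, ← hpdf_abs]
    rcases le_total 0 w with hw | hw
    · obtain ⟨hlo, hhi⟩ := hpos hw
      rw [abs_of_nonneg hw] at hmills ⊢
      constructor <;> nlinarith
    · obtain ⟨hlo, hhi⟩ := hneg hw
      rw [abs_of_nonpos hw] at hmills ⊢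
      constructor <;> nlinarith
  obtain ⟨hh0, hh1⟩ := h01 w
  rw [steinDeriv, abs_le]
  constructor <;> linarith [hwI.1, hwI.2]

end SteinSolution

section Ramp

/-- For `0 < α`, the continuous approximation of the indicator of `Set.Iic z` which equals `1` on
`Set.Iic z`, vanishes on `Set.Ici (z + α)` and is affine in between. -/
noncomputable def ramp (z α w : ℝ) : ℝ := max 0 (z + α - max z w) / α

lemma continuous_ramp (z α : ℝ) : Continuous (ramp z α) := by
  unfold ramp
  fun_prop

variable {z α : ℝ}

lemma ramp_mem_Icc (hα : 0 < α) (w : ℝ) : ramp z α w ∈ Set.Icc 0 1 :=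
  ⟨by unfold ramp; positivity,
    (div_le_one hα).2 (max_le hα.le (by linarith [le_max_left z w]))⟩

lemma antitone_ramp (hα : 0 < α) : Antitone (ramp z α) := by
  intro v w hvw
  refine div_le_div_of_nonneg_right ?_ hα.le
  gcongr

lemma ramp_eq_one {w : ℝ} (hα : 0 < α) (hw : w ≤ z) : ramp z α w = 1 := by
  rw [ramp, max_eq_left hw, add_sub_cancel_left, max_eq_right hα.le, div_self hα.ne']

lemma ramp_eq_zero {w : ℝ} (hw : z + α ≤ w) : ramp z α w = 0 := by
  rw [ramp, max_eq_left (by linarith [le_max_right z w]), zero_div]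

lemma ramp_eq_integral_indicator (w : ℝ) :
    ramp z α w = α⁻¹ * ∫ x in Set.Ioc z (z + α), (Set.Ici w).indicator 1 x := by
  have hset : (Set.Ioc z (z + α) ∩ Set.Ici w : Set ℝ) =ᵐ[volume] Set.Ioc (max z w) (z + α) := by
    rw [← Set.Ioc_inter_Ioi]
    exact (ae_eq_refl _).inter Ioi_ae_eq_Ici.symm
  rw [setIntegral_indicator measurableSet_Ici, setIntegral_congr_set hset]
  simp [ramp, max_comm, div_eq_inv_mul]

variable {ν : Measure ℝ}

lemma intervalIntegrable_cdf_add (t a b : ℝ) :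
    IntervalIntegrable (fun x => cdf ν (x + t)) volume a b :=
  ((monotone_cdf ν).comp fun _ _ hxy => by gcongr).intervalIntegrable

variable [IsProbabilityMeasure ν]

lemma integrable_ramp_sub (hα : 0 < α) (t : ℝ) : Integrable (fun w => ramp z α (w - t)) ν :=
  integrable_of_mem_Icc ((continuous_ramp z α).comp (by fun_prop)).measurable
    fun w => ramp_mem_Icc hα (w - t)

lemma integral_ramp_sub (hα : 0 < α) (t : ℝ) :
    ∫ w, ramp z α (w - t) ∂ν = α⁻¹ * ∫ x in z..z + α, cdf ν (x + t) := by
  have hint : Integrable (fun q : ℝ × ℝ => (Set.Ici (q.1 - t)).indicator (1 : ℝ → ℝ) q.2)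
      (ν.prod (volume.restrict (Set.Ioc z (z + α)))) := by
    refine (integrable_const (1 : ℝ)).indicator (s := {q : ℝ × ℝ | q.1 - t ≤ q.2}) ?_
    exact measurableSet_le (by fun_prop) (by fun_prop)
  simp_rw [ramp_eq_integral_indicator]
  rw [integral_const_mul, integral_integral_swap hint,
    intervalIntegral.integral_of_le (by linarith)]
  congr with x
  rw [cdf_eq_real, ← integral_indicator_one measurableSet_Iic]
  congr with w
  simp [Set.indicator]

lemma integral_ramp (hα : 0 < α) :
    ∫ w, ramp z α w ∂ν = α⁻¹ * ∫ x in z..z + α, cdf ν x := by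
  simpa using integral_ramp_sub (ν := ν) hα 0

lemma cdf_le_integral_ramp (hα : 0 < α) : cdf ν z ≤ ∫ w, ramp z α w ∂ν := by
  rw [cdf_eq_real, ← integral_indicator_one measurableSet_Iic]
  refine integral_mono ((integrable_const 1).indicator measurableSet_Iic)
    (by simpa using integrable_ramp_sub hα 0) fun w => Set.indicator_le' ?_ ?_ w
  · exact fun w hw => (ramp_eq_one hα hw).ge
  · exact fun w _ => (ramp_mem_Icc hα w).1

lemma integral_ramp_le_cdf (hα : 0 < α) : ∫ w, ramp z α w ∂ν ≤ cdf ν (z + α) := by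
  rw [cdf_eq_real, ← integral_indicator_one measurableSet_Iic]
  refine integral_mono (by simpa using integrable_ramp_sub hα 0)
    ((integrable_const 1).indicator measurableSet_Iic) fun w => ?_
  by_cases hw : w ≤ z + α
  · simpa [hw] using (ramp_mem_Icc hα w).2
  · simp [hw, ramp_eq_zero (not_le.1 hw).le]

lemma abs_cdf_sub_cdf_le_of_ramp {γ : Measure ℝ} [IsProbabilityMeasure γ] {c ε : ℝ} (hα : 0 < α)
    (hlip : ∀ x s, |cdf γ (x + s) - cdf γ x| ≤ c * |s|)
    (hramp : ∀ z, |∫ w, ramp z α w ∂ν - ∫ w, ramp z α w ∂γ| ≤ ε) (z : ℝ) :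
    |cdf ν z - cdf γ z| ≤ c * α + ε := by
  have hupper := abs_le.1 (hramp z)
  have hlower := abs_le.1 (hramp (z - α))
  have hlip_right := abs_le.1 (hlip z α)
  have hlip_left := abs_le.1 (hlip (z - α) α)
  have hν := integral_ramp_le_cdf (ν := ν) (z := z - α) hα
  have hγ := integral_ramp_le_cdf (ν := γ) (z := z) hα
  rw [abs_of_pos hα] at hlip_right hlip_left
  rw [sub_add_cancel] at hlip_left hν
  rw [abs_le]
  constructor
  · linarith [cdf_le_integral_ramp (ν := γ) (z := z - α) hα]
  · linarith [cdf_le_integral_ramp (ν := ν) (z := z) hα]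

variable {c η : ℝ} (hconc : ∀ x s, |cdf ν (x + s) - cdf ν x| ≤ c * |s| + η)

include hconc

lemma abs_integral_ramp_sub_shift_le (hα : 0 < α) (t : ℝ) :
    |∫ w, ramp z α w ∂ν - ∫ w, ramp z α (w - t) ∂ν| ≤ c * |t| + η := by
  rw [integral_ramp hα, integral_ramp_sub hα, ← mul_sub, ← intervalIntegral.integral_sub
    (by simpa using intervalIntegrable_cdf_add 0 z (z + α)) (intervalIntegrable_cdf_add t _ _),
    abs_mul, abs_of_pos (inv_pos.2 hα), inv_mul_le_iff₀ hα, mul_comm]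
  have hbound := intervalIntegral.norm_integral_le_of_norm_le_const (a := z) (b := z + α)
    (f := fun x => cdf ν x - cdf ν (x + t)) (C := c * |t| + η) fun x _ => by
      rw [norm_sub_rev]
      exact hconc x t
  rwa [add_sub_cancel_left, abs_of_pos hα] at hbound

lemma abs_integral_ramp_sub_shift_le_mul (hα : 0 < α) (t : ℝ) :
    |∫ w, ramp z α w ∂ν - ∫ w, ramp z α (w - t) ∂ν| ≤ |t| * (c + η / α) := by
  have hint (a b : ℝ) : IntervalIntegrable (cdf ν) volume a b :=
    (monotone_cdf ν).intervalIntegrable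
  have hswap : (∫ x in z..z + α, cdf ν x) - ∫ x in z..z + α, cdf ν (x + t) =
      -∫ x in z..z + t, (cdf ν (x + α) - cdf ν x) := by
    rw [intervalIntegral.integral_sub (intervalIntegrable_cdf_add α _ _) (hint _ _),
      intervalIntegral.integral_comp_add_right, intervalIntegral.integral_comp_add_right,
      neg_sub, add_right_comm z t α]
    linarith [
      intervalIntegral.integral_add_adjacent_intervals (hint z (z + t)) (hint _ (z + α + t)),
      intervalIntegral.integral_add_adjacent_intervals (hint z (z + α)) (hint _ (z + α + t))]
  have hbound := intervalIntegral.norm_integral_le_of_norm_le_const (a := z) (b := z + t)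
    (f := fun x => cdf ν (x + α) - cdf ν x) (C := c * α + η) fun x _ => by
      simpa only [abs_of_pos hα, norm_eq_abs] using hconc x α
  rw [integral_ramp hα, integral_ramp_sub hα, ← mul_sub, hswap, abs_mul, abs_neg,
    abs_of_pos (inv_pos.2 hα), inv_mul_le_iff₀ hα]
  rw [add_sub_cancel_left] at hbound
  refine hbound.trans_eq ?_
  field_simp

end Ramp

section Perturbation

lemma abs_add_sub_le_of_abs_sub_le {F G : ℝ → ℝ} {c δ : ℝ}
    (hG : ∀ x s, |G (x + s) - G x| ≤ c * |s|) (hFG : ∀ x, |F x - G x| ≤ δ) (x s : ℝ) :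
    |F (x + s) - F x| ≤ c * |s| + 2 * δ := by
  rw [abs_le]
  constructor <;>
    linarith [abs_le.1 (hG x s), abs_le.1 (hFG x), abs_le.1 (hFG (x + s))]

end Perturbation

section Clip

/-- Truncation of a real number to `[-1, 1]`. -/
noncomputable def clip (y : ℝ) : ℝ := max (-1) (min y 1)

lemma continuous_clip : Continuous clip := by
  unfold clip
  fun_prop

lemma abs_clip (y : ℝ) : |clip y| = min |y| 1 := by
  simp only [clip, abs_eq_max_neg, max_def, min_def]
  split_ifs <;> linarith

lemma abs_clip_le_one (y : ℝ) : |clip y| ≤ 1 :=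
  (abs_clip y).trans_le (min_le_right _ _)

lemma clip_of_abs_le_one {y : ℝ} (hy : |y| ≤ 1) : clip y = y := by
  rw [abs_le] at hy
  rw [clip, min_eq_left hy.2, max_eq_right hy.1]

lemma abs_sub_clip_of_one_le_abs {y : ℝ} (hy : 1 ≤ |y|) : |y - clip y| = |y| - 1 := by
  rcases le_abs'.1 hy with h | h
  · rw [clip, min_eq_left (by linarith), max_eq_left h, abs_of_nonpos (by linarith),
      abs_of_nonpos (by linarith)]
    ring
  · rw [clip, min_eq_right h, max_eq_right (by norm_num), abs_of_nonneg (by linarith),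
      abs_of_nonneg (by linarith)]

lemma abs_clip_pow_le_rpow {s : ℝ} {n : ℕ} (hs : 0 ≤ s) (hsn : s ≤ n) (y : ℝ) :
    |clip y| ^ n ≤ |y| ^ s := by
  rw [abs_clip, ← rpow_natCast]
  calc min |y| 1 ^ (n : ℝ) ≤ min |y| 1 ^ s :=
        rpow_le_rpow_of_exponent_ge_of_imp (by positivity) (min_le_right _ _) hsn
          fun _ hn => hs.antisymm' (hsn.trans_eq hn)
    _ ≤ |y| ^ s := by gcongr; exact min_le_left _ _

lemma clip_sq_add_abs_sub_clip_le_rpow {s : ℝ} (hs : 1 ≤ s) (hs2 : s ≤ 2) (y : ℝ) :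
    clip y ^ 2 + |y - clip y| ≤ |y| ^ s := by
  rcases le_total |y| 1 with hy | hy
  · have := abs_clip_pow_le_rpow (s := s) (n := 2) (by linarith) (by exact_mod_cast hs2) y
    simpa [clip_of_abs_le_one hy] using this
  · have hclip : clip y ^ 2 = 1 := by rw [← sq_abs, abs_clip, min_eq_right hy, one_pow]
    rw [abs_sub_clip_of_one_le_abs hy, hclip, add_sub_cancel]
    exact self_le_rpow_of_one_le hy hs

lemma abs_sub_clip_le_rpow {s : ℝ} (hs : 1 ≤ s) (y : ℝ) : |y - clip y| ≤ |y| ^ s := by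
  rcases le_total |y| 1 with hy | hy
  · rw [clip_of_abs_le_one hy, sub_self, abs_zero]
    positivity
  · rw [abs_sub_clip_of_one_le_abs hy]
    linarith [self_le_rpow_of_one_le hy hs]

end Clip

section StepKernel

/-- The signed indicator of the interval between `0` and `c`, so that integrating against
`stepKernel c` is integrating from `0` to `c`. -/
noncomputable def stepKernel (c t : ℝ) : ℝ :=
  (Set.Ioc 0 c).indicator 1 t - (Set.Ioc c 0).indicator 1 t

lemma stepKernel_of_nonneg {c : ℝ} (hc : 0 ≤ c) : stepKernel c = (Set.Ioc 0 c).indicator 1 := by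
  ext t
  simp [stepKernel, Set.Ioc_eq_empty_of_le hc]

lemma stepKernel_of_nonpos {c : ℝ} (hc : c ≤ 0) : stepKernel c = -(Set.Ioc c 0).indicator 1 := by
  ext t
  simp [stepKernel, Set.Ioc_eq_empty_of_le hc]

lemma integral_stepKernel_mul {c : ℝ} (hc : |c| ≤ 1) (g : ℝ → ℝ) :
    ∫ t in Set.Ioc (-1) 1, stepKernel c t * g t = ∫ t in 0..c, g t := by
  rw [abs_le] at hc
  rcases le_total 0 c with h0 | h0
  · have hfun : (fun t => stepKernel c t * g t) = (Set.Ioc 0 c).indicator g := by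
      ext t
      rw [stepKernel_of_nonneg h0, ← Set.indicator_mul_left]
      simp
    rw [hfun, setIntegral_indicator measurableSet_Ioc, intervalIntegral.integral_of_le h0,
      Set.inter_eq_self_of_subset_right (Set.Ioc_subset_Ioc (by norm_num) hc.2)]
  · have hfun : (fun t => stepKernel c t * g t) = fun t => -(Set.Ioc c 0).indicator g t := by
      ext t
      rw [stepKernel_of_nonpos h0, Pi.neg_apply, neg_mul, ← Set.indicator_mul_left]
      simp
    rw [hfun, integral_neg, setIntegral_indicator measurableSet_Ioc,
      intervalIntegral.integral_of_ge h0,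
      Set.inter_eq_self_of_subset_right (Set.Ioc_subset_Ioc hc.1 (by norm_num))]

lemma abs_stepKernel_le_one (c t : ℝ) : |stepKernel c t| ≤ 1 := by
  rcases le_total 0 c with h0 | h0
  · rw [stepKernel_of_nonneg h0, Set.indicator]
    split_ifs <;> simp
  · rw [stepKernel_of_nonpos h0, Pi.neg_apply, Set.indicator]
    split_ifs <;> simp

lemma abs_stepKernel (c t : ℝ) : |stepKernel c t| = stepKernel c t ^ 2 := by
  rcases le_total 0 c with h0 | h0
  · rw [stepKernel_of_nonneg h0, Set.indicator]
    split_ifs <;> simp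
  · rw [stepKernel_of_nonpos h0, Pi.neg_apply, Set.indicator]
    split_ifs <;> simp

lemma abs_mul_abs_stepKernel (c t : ℝ) : |t| * |stepKernel c t| = stepKernel c t * t := by
  rcases le_total 0 c with h0 | h0
  · rw [stepKernel_of_nonneg h0, Set.indicator]
    split_ifs with ht
    · simp [ht.1.le]
    · simp
  · rw [stepKernel_of_nonpos h0, Pi.neg_apply, Set.indicator]
    split_ifs with ht
    · simp [ht.2]
    · simp

lemma integral_stepKernel_self (c : ℝ) : ∫ t in 0..c, stepKernel c t = |c| := by
  rcases le_total 0 c with h0 | h0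
  · rw [stepKernel_of_nonneg h0, intervalIntegral.integral_of_le h0,
      setIntegral_indicator measurableSet_Ioc, Set.inter_self]
    simp [h0, abs_of_nonneg h0]
  · rw [stepKernel_of_nonpos h0, intervalIntegral.integral_of_ge h0]
    simp only [Pi.neg_apply, integral_neg, neg_neg]
    rw [setIntegral_indicator measurableSet_Ioc, Set.inter_self]
    simp [h0, abs_of_nonpos h0]

lemma measurable_stepKernel : Measurable fun q : ℝ × ℝ => stepKernel q.1 q.2 := by
  refine (Measurable.indicator (s := {q : ℝ × ℝ | 0 < q.2 ∧ q.2 ≤ q.1}) measurable_const ?_).sub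
    (Measurable.indicator (s := {q : ℝ × ℝ | q.1 < q.2 ∧ q.2 ≤ 0}) measurable_const ?_)
  · exact (measurableSet_lt measurable_const measurable_snd).inter
      (measurableSet_le measurable_snd measurable_fst)
  · exact (measurableSet_lt measurable_fst measurable_snd).inter
      (measurableSet_le measurable_snd measurable_const)

end StepKernel

section Taylor

lemma abs_integral_le_mul_sq_of_abs_le_mul {g : ℝ → ℝ} {C : ℝ} (hg : ∀ t, |g t| ≤ C * |t|)
    (y : ℝ) :
    |∫ t in 0..y, g t| ≤ C * y ^ 2 / 2 := by
  have hint (c : ℝ) : IntervalIntegrable (fun t => c * t) volume 0 y :=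
    Continuous.intervalIntegrable (by fun_prop) _ _
  rw [← norm_eq_abs]
  rcases le_total 0 y with hy | hy
  · refine (intervalIntegral.norm_integral_le_of_norm_le hy
      (ae_of_all _ fun t ht => ?_) (hint C)).trans_eq ?_
    · simpa only [norm_eq_abs, abs_of_pos ht.1] using hg t
    · rw [intervalIntegral.integral_const_mul, integral_id]
      ring
  · rw [intervalIntegral.integral_symm, norm_neg]
    refine (intervalIntegral.norm_integral_le_of_norm_le hy
      (ae_of_all _ fun t ht => ?_) (hint (-C)).symm).trans_eq ?_
    · simpa only [norm_eq_abs, abs_of_nonpos ht.2, mul_neg, neg_mul] using hg t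
    · rw [intervalIntegral.integral_const_mul, integral_id]
      ring

variable {h : ℝ → ℝ} (hc : Continuous h) (h01 : ∀ x, h x ∈ Set.Icc 0 1)

include hc h01

lemma hasDerivAt_steinSolution_of_mem_Icc (w : ℝ) :
    HasDerivAt (steinSolution h) (steinDeriv h w) w :=
  hasDerivAt_steinSolution hc (integrable_of_mem_Icc hc.measurable h01) w

lemma continuous_steinSolution : Continuous (steinSolution h) :=
  continuous_iff_continuousAt.2 fun w =>
    (hasDerivAt_steinSolution_of_mem_Icc hc h01 w).continuousAt

lemma continuous_steinDeriv : Continuous (steinDeriv h) := by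
  have := continuous_steinSolution hc h01
  unfold steinDeriv
  fun_prop

lemma abs_steinSolution_sub_le (w t : ℝ) :
    |steinSolution h (w - t) - steinSolution h w| ≤ |t| := by
  have hbound := Convex.norm_image_sub_le_of_norm_hasDerivWithin_le (s := Set.univ) (C := 1)
    (fun x _ => (hasDerivAt_steinSolution_of_mem_Icc hc h01 x).hasDerivWithinAt)
    (fun x _ => abs_steinDeriv_le_one hc.measurable h01 x) convex_univ
    (Set.mem_univ w) (Set.mem_univ (w - t))
  simpa using hbound

lemma abs_steinDeriv_sub_add_le (w t : ℝ) :
    |steinDeriv h (w - t) - steinDeriv h w + (h w - h (w - t))| ≤ (|w| + √(2 * π)) * |t| := by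
  calc |steinDeriv h (w - t) - steinDeriv h w + (h w - h (w - t))|
      = |w * (steinSolution h (w - t) - steinSolution h w) - t * steinSolution h (w - t)| := by
        simp only [steinDeriv]
        ring_nf
    _ ≤ |w * (steinSolution h (w - t) - steinSolution h w)| + |t * steinSolution h (w - t)| :=
        abs_sub _ _
    _ ≤ |w| * |t| + |t| * √(2 * π) := by
        rw [abs_mul, abs_mul]
        exact add_le_add
          (mul_le_mul_of_nonneg_left (abs_steinSolution_sub_le hc h01 w t) (abs_nonneg w))
          (mul_le_mul_of_nonneg_left (abs_steinSolution_le hc.measurable h01 _) (abs_nonneg t))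
    _ = (|w| + √(2 * π)) * |t| := by ring

lemma integral_steinDeriv_sub (w y : ℝ) :
    ∫ t in 0..y, (steinDeriv h (w - t) - steinDeriv h w) =
      steinSolution h w - steinSolution h (w - y) - y * steinDeriv h w := by
  have hcont := continuous_steinDeriv hc h01
  rw [intervalIntegral.integral_sub (Continuous.intervalIntegrable (by fun_prop) _ _)
      intervalIntegrable_const, intervalIntegral.integral_comp_sub_left,
    intervalIntegral.integral_const, sub_zero, sub_zero,
    intervalIntegral.integral_eq_sub_of_hasDerivAt
      (fun x _ => hasDerivAt_steinSolution_of_mem_Icc hc h01 x) (hcont.intervalIntegrable _ _),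
    smul_eq_mul]

/- On `[0, clip y]` the increments of `h` cancel against those of the derivative, leaving a
quadratic error; beyond `clip y` the derivative is merely bounded. -/
lemma abs_steinSolution_taylor_le (w y : ℝ) :
    |steinSolution h w - steinSolution h (w - y) - y * steinDeriv h w
        + ∫ t in 0..clip y, (h w - h (w - t))|
      ≤ 2 * |y - clip y| + (|w| + √(2 * π)) * clip y ^ 2 / 2 := by
  have hcont := continuous_steinDeriv hc h01
  have hfar : |∫ t in clip y..y, (steinDeriv h (w - t) - steinDeriv h w)| ≤ 2 * |y - clip y| := by
    refine intervalIntegral.norm_integral_le_of_norm_le_const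
      (f := fun t => steinDeriv h (w - t) - steinDeriv h w) fun t _ => (norm_sub_le _ _).trans ?_
    rw [← one_add_one_eq_two]
    exact add_le_add (abs_steinDeriv_le_one hc.measurable h01 _)
      (abs_steinDeriv_le_one hc.measurable h01 _)
  have hnear := abs_integral_le_mul_sq_of_abs_le_mul
    (abs_steinDeriv_sub_add_le hc h01 w) (clip y)
  have hsplit : steinSolution h w - steinSolution h (w - y) - y * steinDeriv h w
        + ∫ t in 0..clip y, (h w - h (w - t)) =
      (∫ t in clip y..y, (steinDeriv h (w - t) - steinDeriv h w)) +
        ∫ t in 0..clip y, (steinDeriv h (w - t) - steinDeriv h w + (h w - h (w - t))) := by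
    have hint {g : ℝ → ℝ} (hg : Continuous g) (a b : ℝ) : IntervalIntegrable g volume a b :=
      hg.intervalIntegrable a b
    rw [← integral_steinDeriv_sub hc h01,
      intervalIntegral.integral_add (hint (by fun_prop) _ _) (hint (by fun_prop) _ _),
      ← add_assoc, add_comm (∫ t in clip y..y, _),
      intervalIntegral.integral_add_adjacent_intervals (hint (by fun_prop) _ _)
        (hint (by fun_prop) _ _)]
  rw [hsplit]
  exact (abs_add_le _ _).trans (add_le_add hfar hnear)

end Taylor

section CauchySchwarz

variable {Ω : Type*} [MeasurableSpace Ω] {μ : Measure Ω} {f g : Ω → ℝ}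

lemma integral_abs_mul_le_sqrt_mul_sqrt (hf : MemLp f 2 μ) (hg : MemLp g 2 μ) :
    ∫ ω, |f ω * g ω| ∂μ ≤ √(∫ ω, f ω ^ 2 ∂μ) * √(∫ ω, g ω ^ 2 ∂μ) := by
  have := integral_mul_norm_le_Lp_mul_Lq HolderConjugate.two_two
    (by simpa using hf) (by simpa using hg)
  simpa [abs_mul, sqrt_eq_rpow] using this

lemma memLp_two_sqrt (hf0 : 0 ≤ f) (hf : Integrable f μ) : MemLp (fun ω => √(f ω)) 2 μ := by
  rw [memLp_two_iff_integrable_sq (continuous_sqrt.comp_aestronglyMeasurable hf.1)]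
  simpa only [sq_sqrt (hf0 _)] using hf

lemma integral_sqrt_le_sqrt_mul_sqrt [IsFiniteMeasure μ] (hf0 : 0 ≤ f) (hf : Integrable f μ) :
    ∫ ω, √(f ω) ∂μ ≤ √(μ.real Set.univ) * √(∫ ω, f ω ∂μ) := by
  simpa [sq_sqrt (hf0 _), abs_of_nonneg] using
    integral_abs_mul_le_sqrt_mul_sqrt (memLp_const 1) (memLp_two_sqrt hf0 hf)

variable [IsProbabilityMeasure μ]

lemma integral_abs_sub_integral_le_sqrt_variance (hf : MemLp f 2 μ) :
    ∫ ω, |f ω - ∫ ω, f ω ∂μ| ∂μ ≤ √(Var[f; μ]) := by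
  rw [variance_eq_integral hf.1.aemeasurable]
  simpa using integral_abs_mul_le_sqrt_mul_sqrt (hf.sub (memLp_const _)) (memLp_const (1 : ℝ))

lemma integral_abs_sub_integral_le (hf : Integrable f μ) (hg : MemLp g 2 μ) :
    ∫ ω, |f ω - ∫ ω, f ω ∂μ| ∂μ ≤ 2 * ∫ ω, |f ω - g ω| ∂μ + √(Var[g; μ]) := by
  have hg1 : Integrable g μ := hg.integrable (by norm_num)
  have hmean : |∫ ω, g ω ∂μ - ∫ ω, f ω ∂μ| ≤ ∫ ω, |f ω - g ω| ∂μ := by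
    rw [abs_sub_comm, ← integral_sub hf hg1]
    exact abs_integral_le_integral_abs
  have hdiff : Integrable (fun ω => |f ω - g ω|) μ := (hf.sub hg1).abs
  have hcentred : Integrable (fun ω => |g ω - ∫ ω, g ω ∂μ|) μ :=
    (hg1.sub (integrable_const _)).abs
  have hsum : Integrable (fun ω => |f ω - g ω| + |g ω - ∫ ω, g ω ∂μ|) μ := hdiff.add hcentred
  calc ∫ ω, |f ω - ∫ ω, f ω ∂μ| ∂μ
      ≤ ∫ ω, (|f ω - g ω| + |g ω - ∫ ω, g ω ∂μ| + |∫ ω, g ω ∂μ - ∫ ω, f ω ∂μ|) ∂μ := by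
        refine integral_mono (hf.sub (integrable_const _)).abs (hsum.add (integrable_const _))
          fun ω => ?_
        have := abs_add_three (f ω - g ω) (g ω - ∫ ω, g ω ∂μ) (∫ ω, g ω ∂μ - ∫ ω, f ω ∂μ)
        simpa only [sub_add_sub_cancel] using this
    _ = ∫ ω, |f ω - g ω| ∂μ + ∫ ω, |g ω - ∫ ω, g ω ∂μ| ∂μ
          + |∫ ω, g ω ∂μ - ∫ ω, f ω ∂μ| := by
        rw [integral_add hsum (integrable_const _),
          integral_add hdiff hcentred, integral_const, probReal_univ, one_smul]
    _ ≤ 2 * ∫ ω, |f ω - g ω| ∂μ + √(Var[g; μ]) := by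
        linarith [integral_abs_sub_integral_le_sqrt_variance hg]

lemma abs_integral_mul_le_sqrt_variance (hf : MemLp f 2 μ) (hg : MemLp g 2 μ) :
    |∫ ω, f ω * g ω ∂μ|
      ≤ |∫ ω, f ω ∂μ| * |∫ ω, g ω ∂μ| + √(∫ ω, f ω ^ 2 ∂μ) * √(Var[g; μ]) := by
  have hg0 : MemLp (fun ω => g ω - ∫ ω, g ω ∂μ) 2 μ := hg.sub (memLp_const _)
  have hsplit : ∫ ω, f ω * g ω ∂μ
      = (∫ ω, f ω ∂μ) * ∫ ω, g ω ∂μ + ∫ ω, f ω * (g ω - ∫ ω, g ω ∂μ) ∂μ := by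
    have hprod : Integrable (fun ω => f ω * (g ω - ∫ ω, g ω ∂μ)) μ := hf.integrable_mul hg0
    rw [← integral_mul_const, ← integral_add ((hf.integrable (by norm_num)).mul_const _) hprod]
    congr with ω
    ring
  rw [hsplit, variance_eq_integral hg.1.aemeasurable, ← abs_mul]
  refine (abs_add_le _ _).trans ?_
  gcongr
  exact abs_integral_le_integral_abs.trans (integral_abs_mul_le_sqrt_mul_sqrt hf hg0)

end CauchySchwarz

section LocalVariance

variable {Ω : Type*} [MeasurableSpace Ω] {μ : Measure Ω} [IsProbabilityMeasure μ]
  {ι : Type*} [Fintype ι]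

lemma covariance_le_half_variance_add {U V : Ω → ℝ} (hU : MemLp U 2 μ) (hV : MemLp V 2 μ) :
    cov[U, V; μ] ≤ (Var[U; μ] + Var[V; μ]) / 2 := by
  linarith [variance_sub hU hV, variance_nonneg (U - V) μ]

lemma variance_sum_le_of_indepFun_off {U : ι → Ω → ℝ} (hU : ∀ i, MemLp (U i) 2 μ)
    {N : ι → Finset ι} (hsymm : ∀ i j, j ∈ N i ↔ i ∈ N j)
    (hindep : ∀ i, ∀ j ∉ N i, IndepFun (U i) (U j) μ) {κ : ℕ} (hκ : ∀ i, (N i).card ≤ κ) :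
    Var[fun ω => ∑ i, U i ω; μ] ≤ κ * ∑ i, ∫ ω, U i ω ^ 2 ∂μ := by
  have hswap : ∑ i, ∑ j ∈ N i, Var[U j; μ] = ∑ i, ∑ _j ∈ N i, Var[U i; μ] :=
    Finset.sum_comm' fun i j => by simpa using hsymm i j
  calc Var[fun ω => ∑ i, U i ω; μ]
      = ∑ i, ∑ j ∈ N i, cov[U i, U j; μ] := by
        rw [variance_fun_sum hU]
        refine Finset.sum_congr rfl fun i _ => (Finset.sum_subset (Finset.subset_univ _) ?_).symm
        exact fun j _ hj => (hindep i j hj).covariance_eq_zero (hU i) (hU j)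
    _ ≤ ∑ i, ∑ j ∈ N i, (Var[U i; μ] + Var[U j; μ]) / 2 := by
        gcongr
        exact covariance_le_half_variance_add (hU _) (hU _)
    _ = ∑ i, ∑ _j ∈ N i, Var[U i; μ] := by
        simp_rw [← Finset.sum_div, Finset.sum_add_distrib, hswap, add_self_div_two]
    _ ≤ ∑ i, κ * ∫ ω, U i ω ^ 2 ∂μ := by
        gcongr with i
        rw [Finset.sum_const, nsmul_eq_mul]
        gcongr
        · exact variance_nonneg _ _
        · exact hκ i
        · exact variance_le_expectation_sq (hU i).1
    _ = κ * ∑ i, ∫ ω, U i ω ^ 2 ∂μ := by rw [Finset.mul_sum]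

end LocalVariance

section KernelFubini

variable {Ω : Type*} [MeasurableSpace Ω] {μ : Measure Ω}

lemma integrable_prod_mul_stepKernel_mul {Z C : Ω → ℝ} {G : Ω → ℝ → ℝ} (hZ : Integrable Z μ)
    (hC : Measurable C) (hG : Measurable (Function.uncurry G))
    (hG1 : ∀ ω, ∀ t ∈ Set.Ioc (-1) 1, |G ω t| ≤ 1) :
    Integrable (fun q : Ω × ℝ => Z q.1 * (stepKernel (C q.1) q.2 * G q.1 q.2))
      (μ.prod (volume.restrict (Set.Ioc (-1) 1))) := by
  have hmeas : Measurable fun q : Ω × ℝ => stepKernel (C q.1) q.2 * G q.1 q.2 :=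
    (measurable_stepKernel.comp ((hC.comp measurable_fst).prodMk measurable_snd)).mul hG
  refine (hZ.comp_fst _).mul_bdd (c := 1) hmeas.aestronglyMeasurable ?_
  rw [Measure.ae_prod_iff_ae_ae (measurableSet_le hmeas.norm measurable_const)]
  refine .of_forall fun ω => (ae_restrict_mem measurableSet_Ioc).mono fun t ht => ?_
  rw [norm_eq_abs, abs_mul]
  exact mul_le_one₀ (abs_stepKernel_le_one _ _) (abs_nonneg _) (hG1 ω t ht)

lemma integrable_mul_intervalIntegral {Z C : Ω → ℝ} {G : Ω → ℝ → ℝ} (hZ : Integrable Z μ)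
    (hC : Measurable C) (hC1 : ∀ ω, |C ω| ≤ 1) (hG : Measurable (Function.uncurry G))
    (hG1 : ∀ ω, ∀ t ∈ Set.Ioc (-1) 1, |G ω t| ≤ 1) :
    Integrable (fun ω => Z ω * ∫ t in 0..C ω, G ω t) μ := by
  have := (integrable_prod_mul_stepKernel_mul hZ hC hG hG1).integral_prod_left
  simpa only [integral_const_mul, integral_stepKernel_mul (hC1 _)] using this

lemma memLp_mul_stepKernel {X C : Ω → ℝ} (hX : MemLp X 2 μ) (hC : Measurable C) (t : ℝ) :
    MemLp (fun ω => X ω * stepKernel (C ω) t) 2 μ :=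
  hX.mono (hX.1.mul
    (measurable_stepKernel.comp (hC.prodMk measurable_const)).aestronglyMeasurable) <|
    .of_forall fun ω => by
      simpa [abs_mul] using mul_le_of_le_one_right (abs_nonneg (X ω))
        (abs_stepKernel_le_one (C ω) t)

variable {ι : Type*} [Fintype ι]

lemma abs_mul_abs_integral_sum_mul_stepKernel_le [IsFiniteMeasure μ] {X C : ι → Ω → ℝ}
    (hX : ∀ i, MemLp (X i) 2 μ) (hC : ∀ i, Measurable (C i)) (t : ℝ) :
    |t| * |∫ ω, ∑ i, X i ω * stepKernel (C i ω) t ∂μ|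
      ≤ ∑ i, ∫ ω, |X i ω| * (stepKernel (C i ω) t * t) ∂μ := by
  rw [integral_finsetSum _ fun i _ => (memLp_mul_stepKernel (hX i) (hC i) t).integrable
    (by norm_num)]
  calc |t| * |∑ i, ∫ ω, X i ω * stepKernel (C i ω) t ∂μ|
      ≤ |t| * ∑ i, ∫ ω, |X i ω * stepKernel (C i ω) t| ∂μ := by
        gcongr
        refine (Finset.abs_sum_le_sum_abs _ _).trans ?_
        gcongr
        exact abs_integral_le_integral_abs
    _ = ∑ i, ∫ ω, |X i ω| * (stepKernel (C i ω) t * t) ∂μ := by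
        simp only [Finset.mul_sum, ← integral_const_mul, ← abs_mul_abs_stepKernel, abs_mul,
          mul_left_comm]

variable [SFinite μ] {Z C : ι → Ω → ℝ} {G : ι → Ω → ℝ → ℝ}
  (hZ : ∀ i, Integrable (Z i) μ) (hC : ∀ i, Measurable (C i))
  (hG : ∀ i, Measurable (Function.uncurry (G i)))
  (hG1 : ∀ i ω, ∀ t ∈ Set.Ioc (-1) 1, |G i ω t| ≤ 1)

include hZ hC hG hG1

lemma integrable_sum_integral_mul_stepKernel_mul :
    Integrable (fun t => ∑ i, ∫ ω, Z i ω * (stepKernel (C i ω) t * G i ω t) ∂μ)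
      (volume.restrict (Set.Ioc (-1) 1)) :=
  integrable_finsetSum _ fun i _ =>
    (integrable_prod_mul_stepKernel_mul (hZ i) (hC i) (hG i) (hG1 i)).integral_prod_right

lemma setIntegral_sum_integral_mul_stepKernel_mul (hC1 : ∀ i ω, |C i ω| ≤ 1) :
    ∫ t in Set.Ioc (-1) 1, ∑ i, ∫ ω, Z i ω * (stepKernel (C i ω) t * G i ω t) ∂μ =
      ∑ i, ∫ ω, Z i ω * (∫ t in 0..C i ω, G i ω t) ∂μ := by
  have hprod i := integrable_prod_mul_stepKernel_mul (hZ i) (hC i) (hG i) (hG1 i)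
  rw [integral_finsetSum _ fun i _ => (hprod i).integral_prod_right]
  refine Finset.sum_congr rfl fun i _ => ?_
  rw [← integral_integral_swap (hprod i)]
  simp only [integral_const_mul, integral_stepKernel_mul (hC1 i _)]

omit hG hG1

lemma integrable_and_setIntegral_stepKernel_mul_id (hC1 : ∀ i ω, |C i ω| ≤ 1) :
    Integrable (fun t => ∑ i, ∫ ω, Z i ω * (stepKernel (C i ω) t * t) ∂μ)
      (volume.restrict (Set.Ioc (-1) 1)) ∧
    ∫ t in Set.Ioc (-1) 1, ∑ i, ∫ ω, Z i ω * (stepKernel (C i ω) t * t) ∂μ =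
      ∑ i, ∫ ω, Z i ω * (C i ω ^ 2 / 2) ∂μ := by
  have hmeas (_ : ι) : Measurable (Function.uncurry fun (_ : Ω) (t : ℝ) => t) := measurable_snd
  have hbound (_ : ι) (_ : Ω) (t : ℝ) (ht : t ∈ Set.Ioc (-1) 1) : |t| ≤ 1 :=
    abs_le.2 ⟨ht.1.le, ht.2⟩
  refine ⟨integrable_sum_integral_mul_stepKernel_mul hZ hC hmeas hbound, ?_⟩
  rw [setIntegral_sum_integral_mul_stepKernel_mul hZ hC hmeas hbound hC1]
  simp only [integral_id, zero_pow two_ne_zero, sub_zero]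

lemma integrable_and_setIntegral_stepKernel_mul_self (hC1 : ∀ i ω, |C i ω| ≤ 1) :
    Integrable (fun t => ∑ i, ∫ ω, Z i ω * (stepKernel (C i ω) t * stepKernel (C i ω) t) ∂μ)
      (volume.restrict (Set.Ioc (-1) 1)) ∧
    ∫ t in Set.Ioc (-1) 1,
        ∑ i, ∫ ω, Z i ω * (stepKernel (C i ω) t * stepKernel (C i ω) t) ∂μ =
      ∑ i, ∫ ω, Z i ω * |C i ω| ∂μ := by
  have hmeas (i : ι) : Measurable (Function.uncurry fun ω t => stepKernel (C i ω) t) :=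
    measurable_stepKernel.comp (((hC i).comp measurable_fst).prodMk measurable_snd)
  have hbound (i : ι) (ω : Ω) (t : ℝ) (_ : t ∈ Set.Ioc (-1) 1) :=
    abs_stepKernel_le_one (C i ω) t
  refine ⟨integrable_sum_integral_mul_stepKernel_mul hZ hC hmeas hbound, ?_⟩
  rw [setIntegral_sum_integral_mul_stepKernel_mul hZ hC hmeas hbound hC1]
  simp only [integral_stepKernel_self]

end KernelFubini

section Concentration

variable {Ω : Type*} [MeasurableSpace Ω] {μ : Measure Ω} [IsProbabilityMeasure μ]
  {W : Ω → ℝ}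

lemma abs_sub_le_one_of_mem_Icc {a b : ℝ} (ha : a ∈ Set.Icc 0 1) (hb : b ∈ Set.Icc 0 1) :
    |a - b| ≤ 1 := by
  rw [abs_le]
  constructor <;> linarith [ha.1, ha.2, hb.1, hb.2]

lemma integral_sq_sub_shift_le_abs_integral {h : ℝ → ℝ} (hanti : Antitone h)
    (h01 : ∀ x, h x ∈ Set.Icc 0 1) (hW : Measurable W) (t : ℝ) :
    ∫ ω, (h (W ω) - h (W ω - t)) ^ 2 ∂μ ≤ |∫ ω, (h (W ω) - h (W ω - t)) ∂μ| := by
  have hint : Integrable (fun ω => h (W ω) - h (W ω - t)) μ :=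
    (integrable_of_mem_Icc (hanti.measurable.comp hW) fun ω => h01 (W ω)).sub
      (integrable_of_mem_Icc (hanti.measurable.comp (hW.sub_const t)) fun ω => h01 (W ω - t))
  have hsq (ω : Ω) : (h (W ω) - h (W ω - t)) ^ 2 ≤ |h (W ω) - h (W ω - t)| := by
    rw [← sq_abs]
    exact pow_le_of_le_one (abs_nonneg _) (abs_sub_le_one_of_mem_Icc (h01 _) (h01 _)) two_ne_zero
  have hsign : ∫ ω, |h (W ω) - h (W ω - t)| ∂μ = |∫ ω, (h (W ω) - h (W ω - t)) ∂μ| := by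
    rcases le_total 0 t with ht | ht
    · have hle (ω : Ω) : h (W ω) - h (W ω - t) ≤ 0 := sub_nonpos.2 (hanti (by linarith))
      simp only [abs_of_nonpos (hle _), abs_of_nonpos (integral_nonpos hle), integral_neg]
    · have hle (ω : Ω) : 0 ≤ h (W ω) - h (W ω - t) := sub_nonneg.2 (hanti (by linarith))
      have hle_int : 0 ≤ ∫ ω, (h (W ω) - h (W ω - t)) ∂μ := integral_nonneg hle
      simp only [abs_of_nonneg (hle _), abs_of_nonneg hle_int]
  rw [← hsign]
  exact integral_mono_of_nonneg (.of_forall fun _ => sq_nonneg _) hint.abs (.of_forall hsq)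

lemma memLp_ramp_sub_shift {z α : ℝ} (hW : Measurable W) (hα : 0 < α) (t : ℝ) :
    MemLp (fun ω => ramp z α (W ω) - ramp z α (W ω - t)) 2 μ := by
  have hcont := continuous_ramp z α
  exact .of_bound (Measurable.aestronglyMeasurable (by fun_prop)) 1 <|
    .of_forall fun ω => abs_sub_le_one_of_mem_Icc (ramp_mem_Icc hα _) (ramp_mem_Icc hα _)

variable {z α c η : ℝ} (hW : Measurable W) (hα : 0 < α)
  (hconc : ∀ x s, |cdf (μ.map W) (x + s) - cdf (μ.map W) x| ≤ c * |s| + η)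

include hW hα hconc

lemma abs_integral_ramp_sub_shift_mul_le {S : Ω → ℝ} (hS : MemLp S 2 μ) (t : ℝ) :
    |∫ ω, (ramp z α (W ω) - ramp z α (W ω - t)) * S ω ∂μ|
      ≤ |t| * (c + η / α) * |∫ ω, S ω ∂μ| + √((c * |t| + η) * Var[S; μ]) := by
  have := Measure.isProbabilityMeasure_map hW.aemeasurable (μ := μ)
  have hcont := continuous_ramp z α
  have hmean : ∫ ω, (ramp z α (W ω) - ramp z α (W ω - t)) ∂μ
      = ∫ w, ramp z α w ∂μ.map W - ∫ w, ramp z α (w - t) ∂μ.map W := by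
    rw [← integral_sub (by simpa using integrable_ramp_sub hα 0) (integrable_ramp_sub hα t),
      integral_map hW.aemeasurable (Continuous.aestronglyMeasurable (by fun_prop))]
  have hD2 := integral_sq_sub_shift_le_abs_integral (antitone_ramp (z := z) hα)
    (ramp_mem_Icc hα) hW (μ := μ) t
  refine (abs_integral_mul_le_sqrt_variance (memLp_ramp_sub_shift hW hα t) hS).trans ?_
  rw [sqrt_mul' _ (variance_nonneg S μ)]
  gcongr
  · rw [hmean]
    exact abs_integral_ramp_sub_shift_le_mul hconc hα t
  · rw [hmean] at hD2
    exact hD2.trans (abs_integral_ramp_sub_shift_le hconc hα t)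

variable {ι : Type*} [Fintype ι] {X C : ι → Ω → ℝ} {κ : ℝ} (hX : ∀ i, MemLp (X i) 2 μ)
  (hC : ∀ i, Measurable (C i))
  (hvar : ∀ t, Var[fun ω => ∑ i, X i ω * stepKernel (C i ω) t; μ]
    ≤ κ * ∑ i, ∫ ω, (X i ω * stepKernel (C i ω) t) ^ 2 ∂μ)

include hX hC hvar

lemma abs_sum_integral_mul_stepKernel_mul_ramp_sub_le (hc : 0 ≤ c) (hη : 0 ≤ η) (t : ℝ) :
    |∑ i, ∫ ω, X i ω * (stepKernel (C i ω) t * (ramp z α (W ω) - ramp z α (W ω - t))) ∂μ|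
      ≤ (c + η / α) * ∑ i, ∫ ω, |X i ω| * (stepKernel (C i ω) t * t) ∂μ
        + √(κ * (c * ∑ i, ∫ ω, X i ω ^ 2 * (stepKernel (C i ω) t * t) ∂μ
          + η * ∑ i, ∫ ω, X i ω ^ 2 * (stepKernel (C i ω) t * stepKernel (C i ω) t) ∂μ)) := by
  have hU (i : ι) := memLp_mul_stepKernel (hX i) (hC i) t
  have hbound := abs_integral_ramp_sub_shift_mul_le (z := z) hW hα hconc
    (memLp_finsetSum Finset.univ fun i _ => hU i) t
  have hexpand : ∫ ω, (ramp z α (W ω) - ramp z α (W ω - t)) * ∑ i, X i ω * stepKernel (C i ω) t ∂μ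
      = ∑ i, ∫ ω, X i ω * (stepKernel (C i ω) t * (ramp z α (W ω) - ramp z α (W ω - t))) ∂μ := by
    have hprod (i : ι) : Integrable (fun ω =>
        (ramp z α (W ω) - ramp z α (W ω - t)) * (X i ω * stepKernel (C i ω) t)) μ :=
      (memLp_ramp_sub_shift hW hα t).integrable_mul (hU i)
    simp_rw [Finset.mul_sum]
    rw [integral_finsetSum _ fun i _ => hprod i]
    simp_rw [mul_comm (ramp z α _ - _), mul_assoc]
  have hvar_t : (c * |t| + η) * Var[fun ω => ∑ i, X i ω * stepKernel (C i ω) t; μ]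
      ≤ κ * (c * ∑ i, ∫ ω, X i ω ^ 2 * (stepKernel (C i ω) t * t) ∂μ
        + η * ∑ i, ∫ ω, X i ω ^ 2 * (stepKernel (C i ω) t * stepKernel (C i ω) t) ∂μ) := by
    have hfactor (i : ι) : ∫ ω, X i ω ^ 2 * (stepKernel (C i ω) t * t) ∂μ
        = |t| * ∫ ω, (X i ω * stepKernel (C i ω) t) ^ 2 ∂μ := by
      simp only [← integral_const_mul, ← abs_mul_abs_stepKernel, abs_stepKernel, mul_pow,
        mul_left_comm]
    calc (c * |t| + η) * Var[fun ω => ∑ i, X i ω * stepKernel (C i ω) t; μ]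
        ≤ (c * |t| + η) * (κ * ∑ i, ∫ ω, (X i ω * stepKernel (C i ω) t) ^ 2 ∂μ) := by
          gcongr
          exact hvar t
      _ = _ := by
          simp only [hfactor, ← Finset.mul_sum, ← sq, ← mul_pow]
          ring
  calc _ ≤ _ := hexpand ▸ hbound
    _ = (c + η / α) * (|t| * |∫ ω, ∑ i, X i ω * stepKernel (C i ω) t ∂μ|) + _ := by
        rw [mul_comm |t|, mul_assoc]
    _ ≤ _ := by
        gcongr
        exact abs_mul_abs_integral_sum_mul_stepKernel_le hX hC t

lemma abs_sum_integral_mul_intervalIntegral_ramp_sub_le (hc : 0 ≤ c) (hη : 0 ≤ η) (hκ : 0 ≤ κ)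
    (hC1 : ∀ i ω, |C i ω| ≤ 1) :
    |∑ i, ∫ ω, X i ω * (∫ t in 0..C i ω, (ramp z α (W ω) - ramp z α (W ω - t))) ∂μ|
      ≤ (c + η / α) * ∑ i, ∫ ω, |X i ω| * (C i ω ^ 2 / 2) ∂μ
        + √2 * √(κ * (c * ∑ i, ∫ ω, X i ω ^ 2 * (C i ω ^ 2 / 2) ∂μ
          + η * ∑ i, ∫ ω, X i ω ^ 2 * |C i ω| ∂μ)) := by
  have hcont := continuous_ramp z α
  have hX1 (i : ι) : Integrable (X i) μ := (hX i).integrable (by norm_num)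
  have hX2 (i : ι) : Integrable (fun ω => X i ω ^ 2) μ := (hX i).integrable_sq
  have hmeas (_ : ι) :
      Measurable (Function.uncurry fun ω t => ramp z α (W ω) - ramp z α (W ω - t)) := by
    simp only [Function.uncurry_def]
    fun_prop
  have hbound (_ : ι) (ω : Ω) (t : ℝ) (_ : t ∈ Set.Ioc (-1) 1) :
      |ramp z α (W ω) - ramp z α (W ω - t)| ≤ 1 :=
    abs_sub_le_one_of_mem_Icc (ramp_mem_Icc hα _) (ramp_mem_Icc hα _)
  obtain ⟨hint₁, hval₁⟩ :=
    integrable_and_setIntegral_stepKernel_mul_id (fun i => (hX1 i).abs) hC hC1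
  obtain ⟨hint₂, hval₂⟩ := integrable_and_setIntegral_stepKernel_mul_id hX2 hC hC1
  obtain ⟨hint₃, hval₃⟩ := integrable_and_setIntegral_stepKernel_mul_self hX2 hC hC1
  have hint := ((hint₂.const_mul c).add (hint₃.const_mul η)).const_mul κ
  have hnonneg : 0 ≤ fun t => κ * (c * ∑ i, ∫ ω, X i ω ^ 2 * (stepKernel (C i ω) t * t) ∂μ
      + η * ∑ i, ∫ ω, X i ω ^ 2 * (stepKernel (C i ω) t * stepKernel (C i ω) t) ∂μ) := by
    intro t
    simp only [← abs_mul_abs_stepKernel, ← sq]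
    positivity
  rw [← setIntegral_sum_integral_mul_stepKernel_mul hX1 hC hmeas hbound hC1, ← norm_eq_abs]
  refine (norm_integral_le_of_norm_le ((hint₁.const_mul (c + η / α)).add
    ((memLp_two_sqrt hnonneg hint).integrable (by norm_num))) (.of_forall
    (abs_sum_integral_mul_stepKernel_mul_ramp_sub_le hW hα hconc hX hC hvar hc hη))).trans ?_
  have hvol : (volume.restrict (Set.Ioc (-1 : ℝ) 1)).real Set.univ = 2 := by
    norm_num [measureReal_def]
  refine (integral_add (hint₁.const_mul (c + η / α))
    ((memLp_two_sqrt hnonneg hint).integrable (by norm_num))).trans_le ?_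
  rw [integral_const_mul, hval₁]
  gcongr
  refine (integral_sqrt_le_sqrt_mul_sqrt hnonneg hint).trans_eq ?_
  rw [hvol, integral_const_mul, integral_add (hint₂.const_mul c) (hint₃.const_mul η),
    integral_const_mul, integral_const_mul, hval₂, hval₃]

end Concentration

section Young

lemma max_rpow_le_add {a b : ℝ} (ha : 0 ≤ a) (hb : 0 ≤ b) (q : ℝ) :
    max a b ^ q ≤ a ^ q + b ^ q := by
  rcases max_choice a b with h | h <;> rw [h]
  · exact le_add_of_nonneg_right (rpow_nonneg hb q)
  · exact le_add_of_nonneg_left (rpow_nonneg ha q)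

lemma rpow_mul_rpow_le {a b s t : ℝ} (ha : 0 ≤ a) (hb : 0 ≤ b) (hs : 0 ≤ s) (ht : 0 ≤ t) :
    a ^ s * b ^ t ≤ a ^ (s + t) + b ^ (s + t) :=
  calc
    a ^ s * b ^ t ≤ max a b ^ s * max a b ^ t := by gcongr <;> simp
    _ = max a b ^ (s + t) := (rpow_add_of_nonneg (ha.trans (le_max_left _ _)) hs ht).symm
    _ ≤ a ^ (s + t) + b ^ (s + t) := max_rpow_le_add ha hb _

lemma rpow_mul_rpow_mul_rpow_le {x a b r s t : ℝ} (hx : 0 ≤ x) (ha : 0 ≤ a) (hb : 0 ≤ b)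
    (hr : 0 ≤ r) (hs : 0 ≤ s) (ht : 0 ≤ t) :
    x ^ r * (a ^ s * b ^ t) ≤ x ^ (r + s + t) + (a ^ (r + s + t) + b ^ (r + s + t)) := by
  have hM : 0 ≤ max x a := hx.trans (le_max_left _ _)
  calc
    x ^ r * (a ^ s * b ^ t) ≤ max x a ^ r * (max x a ^ s * b ^ t) := by gcongr <;> simp
    _ = max x a ^ (r + s) * b ^ t := by rw [rpow_add_of_nonneg hM hr hs, mul_assoc]
    _ ≤ max x a ^ (r + s + t) + b ^ (r + s + t) := rpow_mul_rpow_le hM hb (add_nonneg hr hs) ht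
    _ ≤ x ^ (r + s + t) + (a ^ (r + s + t) + b ^ (r + s + t)) := by
      linarith [max_rpow_le_add hx ha (r + s + t)]

lemma two_mul_mul_rpow_half_le {a b : ℝ} (ha : 0 ≤ a) (hb : 0 ≤ b) (p : ℝ) :
    2 * (a * b) ^ (p / 2) ≤ a ^ p + b ^ p := by
  have hsq {c : ℝ} (hc : 0 ≤ c) : c ^ p = (c ^ (p / 2)) ^ 2 := by
    rw [← rpow_natCast, ← rpow_mul hc, Nat.cast_ofNat, div_mul_cancel₀ _ two_ne_zero]
  rw [mul_rpow ha hb, hsq ha, hsq hb, ← mul_assoc]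
  exact two_mul_le_add_sq _ _

end Young

section Moments

variable {Ω : Type*} [MeasurableSpace Ω] {μ : Measure Ω} {T X Y : Ω → ℝ} {q : ℝ}

lemma integral_le_add_of_le_add {f g h : Ω → ℝ} (hf : 0 ≤ f) (hg : Integrable g μ)
    (hh : Integrable h μ) (hle : ∀ ω, f ω ≤ g ω + h ω) :
    ∫ ω, f ω ∂μ ≤ (∫ ω, g ω ∂μ) + ∫ ω, h ω ∂μ := by
  rw [← integral_add hg hh]
  exact integral_mono_of_nonneg (.of_forall hf) (hg.add hh) (.of_forall hle)

variable (hX : Integrable (fun ω => |X ω| ^ q) μ) (hY : Integrable (fun ω => |Y ω| ^ q) μ)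
include hX hY

lemma integral_abs_mul_clip_sq_add_abs_sub_clip_le (hq2 : 2 ≤ q) (hq3 : q ≤ 3) :
    ∫ ω, |X ω| * (clip (Y ω) ^ 2 + |Y ω - clip (Y ω)|) ∂μ
      ≤ (∫ ω, |X ω| ^ q ∂μ) + ∫ ω, |Y ω| ^ q ∂μ := by
  refine integral_le_add_of_le_add (fun ω => by positivity) hX hY fun ω => ?_
  have hclip := clip_sq_add_abs_sub_clip_le_rpow (s := q - 1) (by linarith) (by linarith) (Y ω)
  have hyoung := rpow_mul_rpow_le (t := q - 1) (abs_nonneg (X ω)) (abs_nonneg (Y ω)) zero_le_one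
    (by linarith)
  rw [rpow_one, add_sub_cancel] at hyoung
  exact (by gcongr : _ ≤ _).trans hyoung

lemma integral_abs_mul_clip_sq_le (hq1 : 1 ≤ q) (hq3 : q ≤ 3) :
    ∫ ω, |X ω| * clip (Y ω) ^ 2 ∂μ ≤ (∫ ω, |X ω| ^ q ∂μ) + ∫ ω, |Y ω| ^ q ∂μ := by
  refine integral_le_add_of_le_add (fun ω => by positivity) hX hY fun ω => ?_
  have hclip := abs_clip_pow_le_rpow (s := q - 1) (n := 2) (by linarith)
    (by push_cast; linarith) (Y ω)
  rw [sq_abs] at hclip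
  have hyoung := rpow_mul_rpow_le (t := q - 1) (abs_nonneg (X ω)) (abs_nonneg (Y ω)) zero_le_one
    (by linarith)
  rw [rpow_one, add_sub_cancel] at hyoung
  exact (by gcongr : _ ≤ _).trans hyoung

lemma integral_sq_mul_abs_clip_pow_le {n : ℕ} (hq2 : 2 ≤ q) (hqn : q ≤ n + 2) :
    ∫ ω, X ω ^ 2 * |clip (Y ω)| ^ n ∂μ ≤ (∫ ω, |X ω| ^ q ∂μ) + ∫ ω, |Y ω| ^ q ∂μ := by
  refine integral_le_add_of_le_add (fun ω => by positivity) hX hY fun ω => ?_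
  have hclip := abs_clip_pow_le_rpow (s := q - 2) (n := n) (by linarith) (by linarith) (Y ω)
  have hyoung := rpow_mul_rpow_le (t := q - 2) (abs_nonneg (X ω)) (abs_nonneg (Y ω)) zero_le_two
    (by linarith)
  rw [rpow_two, sq_abs, add_sub_cancel] at hyoung
  exact (by gcongr : _ ≤ _).trans hyoung

lemma two_mul_integral_abs_mul_sub_clip_le (hq2 : 2 ≤ q) :
    2 * ∫ ω, |X ω * Y ω - clip (X ω * Y ω)| ∂μ
      ≤ (∫ ω, |X ω| ^ q ∂μ) + ∫ ω, |Y ω| ^ q ∂μ := by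
  rw [← integral_const_mul]
  refine integral_le_add_of_le_add (fun ω => by positivity) hX hY fun ω => ?_
  have hclip := abs_sub_clip_le_rpow (s := q / 2) (by linarith) (X ω * Y ω)
  rw [abs_mul (X ω)] at hclip
  linarith [two_mul_mul_rpow_half_le (abs_nonneg (X ω)) (abs_nonneg (Y ω)) q]

lemma two_mul_integral_clip_mul_sq_le (hq0 : 0 ≤ q) (hq4 : q ≤ 4) :
    2 * ∫ ω, clip (X ω * Y ω) ^ 2 ∂μ ≤ (∫ ω, |X ω| ^ q ∂μ) + ∫ ω, |Y ω| ^ q ∂μ := by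
  rw [← integral_const_mul]
  refine integral_le_add_of_le_add (fun ω => by positivity) hX hY fun ω => ?_
  have hclip := abs_clip_pow_le_rpow (s := q / 2) (n := 2) (by linarith)
    (by push_cast; linarith) (X ω * Y ω)
  rw [sq_abs, abs_mul (X ω)] at hclip
  linarith [two_mul_mul_rpow_half_le (abs_nonneg (X ω)) (abs_nonneg (Y ω)) q]

variable (hT : Integrable (fun ω => |T ω| ^ q) μ)
include hT

lemma integral_abs_mul_abs_mul_clip_sq_le (hq2 : 2 ≤ q) (hq4 : q ≤ 4) :
    ∫ ω, |T ω| * (|X ω| * clip (Y ω) ^ 2) ∂μ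
      ≤ (∫ ω, |T ω| ^ q ∂μ) + ((∫ ω, |X ω| ^ q ∂μ) + ∫ ω, |Y ω| ^ q ∂μ) := by
  rw [← integral_add hX hY]
  refine integral_le_add_of_le_add (fun ω => by positivity) hT (hX.add hY) fun ω => ?_
  have hclip := abs_clip_pow_le_rpow (s := q - 2) (n := 2) (by linarith)
    (by push_cast; linarith) (Y ω)
  rw [sq_abs] at hclip
  have hyoung := rpow_mul_rpow_mul_rpow_le (t := q - 2) (abs_nonneg (T ω)) (abs_nonneg (X ω))
    (abs_nonneg (Y ω)) zero_le_one zero_le_one (by linarith)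
  rw [rpow_one, rpow_one, one_add_one_eq_two, add_sub_cancel] at hyoung
  exact (by gcongr : _ ≤ _).trans hyoung

-- On the product space `T` is independent of `(X, Y)`, so the product of expectations is an
-- instance of the joint bound.
lemma integral_abs_mul_integral_abs_mul_clip_sq_le [IsProbabilityMeasure μ] (hq2 : 2 ≤ q)
    (hq4 : q ≤ 4) :
    (∫ ω, |T ω| ∂μ) * ∫ ω, |X ω| * clip (Y ω) ^ 2 ∂μ
      ≤ (∫ ω, |T ω| ^ q ∂μ) + ((∫ ω, |X ω| ^ q ∂μ) + ∫ ω, |Y ω| ^ q ∂μ) := by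
  have h := integral_abs_mul_abs_mul_clip_sq_le (hX.comp_snd μ) (hY.comp_snd μ) (hT.comp_fst μ)
    hq2 hq4
  rw [integral_prod_mul (fun ω => |T ω|) fun ω => |X ω| * clip (Y ω) ^ 2,
    integral_fun_fst (f := fun ω => |T ω| ^ q), integral_fun_snd (f := fun ω => |X ω| ^ q),
    integral_fun_snd (f := fun ω => |Y ω| ^ q)] at h
  simpa only [probReal_univ, one_smul] using h

end Moments

section MomentSum

variable {Ω : Type*} [MeasurableSpace Ω] {μ : Measure Ω} {ι : Type*} [Fintype ι]
  {X Y : ι → Ω → ℝ} {q : ℝ}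

/-- The sum `∑ i, (E|Xᵢ|^q + E|Yᵢ|^q)` of absolute moments. -/
noncomputable def absMomentSum (X Y : ι → Ω → ℝ) (q : ℝ) (μ : Measure Ω) : ℝ :=
  ∑ i, ((∫ ω, |X i ω| ^ q ∂μ) + ∫ ω, |Y i ω| ^ q ∂μ)

lemma absMomentSum_nonneg : 0 ≤ absMomentSum X Y q μ := by
  unfold absMomentSum
  positivity

lemma sum_integral_abs_rpow_le_absMomentSum :
    ∑ i, ∫ ω, |X i ω| ^ q ∂μ ≤ absMomentSum X Y q μ :=
  Finset.sum_le_sum fun _ _ => le_add_of_nonneg_right (by positivity)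

end MomentSum

section SteinIdentity

variable {Ω : Type*} [MeasurableSpace Ω] {μ : Measure Ω}

lemma integral_mul_comp_eq_zero_of_indepFun {X V : Ω → ℝ} {f : ℝ → ℝ}
    (hX : AEStronglyMeasurable X μ) (hmean : ∫ ω, X ω ∂μ = 0) (hV : AEMeasurable V μ)
    (hf : Measurable f) (hindep : IndepFun X V μ) : ∫ ω, X ω * f (V ω) ∂μ = 0 := by
  have hprod := (hindep.comp measurable_id hf).integral_fun_mul_eq_mul_integral hX
    (hf.comp_aemeasurable hV).aestronglyMeasurable
  simpa only [Function.comp_apply, id_eq, hmean, zero_mul] using hprod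

variable {ι : Type*} [Fintype ι] {X Y : ι → Ω → ℝ} {W : Ω → ℝ}
  (hX : ∀ i, MemLp (X i) 2 μ) (hW : ∀ ω, W ω = ∑ i, X i ω)

include hX hW

lemma memLp_of_eq_sum : MemLp W 2 μ := by
  rw [funext hW]
  exact memLp_finsetSum _ fun i _ => hX i

variable (hmean : ∀ i, ∫ ω, X i ω ∂μ = 0)
  (hindep : ∀ i, IndepFun (X i) (fun ω => W ω - Y i ω) μ)
include hmean hindep

lemma sum_integral_mul_eq_integral_sq (hY : ∀ i, MemLp (Y i) 2 μ) :
    ∑ i, ∫ ω, X i ω * Y i ω ∂μ = ∫ ω, W ω ^ 2 ∂μ := by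
  have hW2 := memLp_of_eq_sum hX hW
  have hXW (i : ι) : Integrable (fun ω => X i ω * W ω) μ := (hX i).integrable_mul hW2
  have hXY (i : ι) : Integrable (fun ω => X i ω * Y i ω) μ := (hX i).integrable_mul (hY i)
  have hsq (ω : Ω) : W ω ^ 2 = ∑ i, X i ω * W ω := by rw [← Finset.sum_mul, ← hW, sq]
  simp only [hsq, integral_finsetSum _ fun i _ => hXW i]
  refine Finset.sum_congr rfl fun i _ => ?_
  have hzero := integral_mul_comp_eq_zero_of_indepFun (hX i).1 (hmean i)
    (hW2.aemeasurable.sub (hY i).aemeasurable) measurable_id (hindep i)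
  simp only [id, Pi.sub_apply, mul_sub] at hzero
  rw [integral_sub (hXW i) (hXY i)] at hzero
  exact (sub_eq_zero.1 hzero).symm

lemma integral_mul_comp_eq_sum [IsFiniteMeasure μ] (hY : ∀ i, AEMeasurable (Y i) μ) {f : ℝ → ℝ}
    {K : ℝ} (hf : Measurable f) (hfK : ∀ w, |f w| ≤ K) :
    ∫ ω, W ω * f (W ω) ∂μ = ∑ i, ∫ ω, X i ω * (f (W ω) - f (W ω - Y i ω)) ∂μ := by
  have hWm := (memLp_of_eq_sum hX hW).aemeasurable
  have hint {V : Ω → ℝ} (hV : AEMeasurable V μ) (i : ι) :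
      Integrable (fun ω => X i ω * f (V ω)) μ :=
    ((hX i).integrable (by norm_num)).mul_bdd (c := K)
      (hf.comp_aemeasurable hV).aestronglyMeasurable (.of_forall fun _ => hfK _)
  have hWf (ω : Ω) : W ω * f (W ω) = ∑ i, X i ω * f (W ω) := by rw [← Finset.sum_mul, ← hW]
  simp only [hWf, integral_finsetSum _ fun i _ => hint hWm i]
  refine Finset.sum_congr rfl fun i _ => ?_
  have hV : AEMeasurable (fun ω => W ω - Y i ω) μ := hWm.sub (hY i)
  simp only [mul_sub]
  rw [integral_sub (hint hWm i) (hint hV i),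
    integral_mul_comp_eq_zero_of_indepFun (hX i).1 (hmean i) hV hf (hindep i), sub_zero]

end SteinIdentity

section ClipIntegrable

variable {Ω : Type*} [MeasurableSpace Ω] {μ : Measure Ω} {X Y Z : Ω → ℝ}

lemma integrable_mul_clip_sq (hZ : Integrable Z μ) (hY : AEMeasurable Y μ) :
    Integrable (fun ω => Z ω * clip (Y ω) ^ 2) μ :=
  hZ.mul_bdd (c := 1)
    ((continuous_clip.measurable.comp_aemeasurable hY).pow_const 2).aestronglyMeasurable
    (.of_forall fun ω => by simpa using abs_clip_le_one (Y ω))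

lemma integrable_abs_mul_abs_sub_clip [IsFiniteMeasure μ] (hX : MemLp X 2 μ) (hY : MemLp Y 2 μ) :
    Integrable (fun ω => |X ω| * |Y ω - clip (Y ω)|) μ := by
  have hclip : MemLp (fun ω => clip (Y ω)) 2 μ :=
    .of_bound (continuous_clip.measurable.comp_aemeasurable hY.aemeasurable).aestronglyMeasurable 1
      (.of_forall fun ω => abs_clip_le_one (Y ω))
  exact hX.abs.integrable_mul (hY.sub hclip).abs

lemma integrable_abs_mul_abs_mul_clip_sq {W : Ω → ℝ} (hW : MemLp W 2 μ) (hX : MemLp X 2 μ)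
    (hY : AEMeasurable Y μ) : Integrable (fun ω => |W ω| * (|X ω| * clip (Y ω) ^ 2)) μ := by
  have hWX : Integrable (fun ω => |W ω| * |X ω|) μ := hW.abs.integrable_mul hX.abs
  simpa only [mul_assoc] using integrable_mul_clip_sq hWX hY

variable [IsFiniteMeasure μ] {W : Ω → ℝ} (hX : MemLp X 2 μ) (hY : MemLp Y 2 μ)
  (hW : MemLp W 2 μ) (K : ℝ)
include hX hY hW

lemma integrable_abs_mul_clip_remainder :
    Integrable (fun ω => |X ω| * (2 * |Y ω - clip (Y ω)| + (|W ω| + K) * clip (Y ω) ^ 2 / 2))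
      μ := by
  have hX1 : Integrable (fun ω => |X ω|) μ := (hX.integrable (by norm_num)).abs
  refine ((((integrable_abs_mul_abs_sub_clip hX hY).const_mul 2).add
    ((integrable_abs_mul_abs_mul_clip_sq hW hX hY.aemeasurable).div_const 2)).add
    ((integrable_mul_clip_sq hX1 hY.aemeasurable).const_mul (K / 2))).congr
    (.of_forall fun ω => ?_)
  simp only [Pi.add_apply]
  ring

lemma integral_abs_mul_clip_remainder :
    ∫ ω, |X ω| * (2 * |Y ω - clip (Y ω)| + (|W ω| + K) * clip (Y ω) ^ 2 / 2) ∂μ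
      = 2 * (∫ ω, |X ω| * (clip (Y ω) ^ 2 + |Y ω - clip (Y ω)|) ∂μ)
        + (∫ ω, |W ω| * (|X ω| * clip (Y ω) ^ 2) ∂μ) / 2
        + (K / 2 - 2) * ∫ ω, |X ω| * clip (Y ω) ^ 2 ∂μ := by
  have hXC := integrable_mul_clip_sq (hX.integrable (by norm_num)).abs hY.aemeasurable
  have hWXC := integrable_abs_mul_abs_mul_clip_sq hW hX hY.aemeasurable
  have hsum : Integrable (fun ω => |X ω| * (clip (Y ω) ^ 2 + |Y ω - clip (Y ω)|)) μ := by
    simp only [mul_add]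
    exact hXC.add (integrable_abs_mul_abs_sub_clip hX hY)
  have hfirst : Integrable (fun ω => 2 * (|X ω| * (clip (Y ω) ^ 2 + |Y ω - clip (Y ω)|))
      + |W ω| * (|X ω| * clip (Y ω) ^ 2) / 2) μ := (hsum.const_mul 2).add (hWXC.div_const 2)
  rw [← integral_const_mul, ← integral_const_mul, ← integral_div,
    ← integral_add (hsum.const_mul 2) (hWXC.div_const 2),
    ← integral_add hfirst (hXC.const_mul _)]
  congr with ω
  ring

end ClipIntegrable

section SteinBound

variable {Ω : Type*} [MeasurableSpace Ω] {μ : Measure Ω} {W : Ω → ℝ} {h : ℝ → ℝ}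
  (hc : Continuous h) (h01 : ∀ x, h x ∈ Set.Icc 0 1)
include hc h01

lemma integrable_mul_intervalIntegral_clip {Z V : Ω → ℝ} (hZ : Integrable Z μ)
    (hV : Measurable V) (hW : Measurable W) :
    Integrable (fun ω => Z ω * ∫ t in 0..clip (V ω), (h (W ω) - h (W ω - t))) μ := by
  refine integrable_mul_intervalIntegral hZ (continuous_clip.measurable.comp hV)
    (fun ω => abs_clip_le_one _) ?_ fun ω t _ => abs_sub_le_one_of_mem_Icc (h01 _) (h01 _)
  have := hc.measurable
  simp only [Function.uncurry_def]
  fun_prop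

lemma integrable_mul_steinSolution {Z V : Ω → ℝ} (hZ : Integrable Z μ) (hV : Measurable V) :
    Integrable (fun ω => Z ω * steinSolution h (V ω)) μ :=
  hZ.mul_bdd (c := √(2 * π))
    ((continuous_steinSolution hc h01).measurable.comp hV).aestronglyMeasurable
    (.of_forall fun _ => abs_steinSolution_le hc.measurable h01 _)

lemma integrable_steinDeriv_comp [IsFiniteMeasure μ] (hW : Measurable W) :
    Integrable (fun ω => steinDeriv h (W ω)) μ :=
  .of_bound ((continuous_steinDeriv hc h01).measurable.comp hW).aestronglyMeasurable 1
    (.of_forall fun _ => abs_steinDeriv_le_one hc.measurable h01 _)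

lemma integral_comp_sub_integral_gaussianReal [IsProbabilityMeasure μ] (hW : Measurable W)
    (hW1 : Integrable W μ) :
    (∫ ω, h (W ω) ∂μ) - ∫ x, h x ∂gaussianReal 0 1 =
      (∫ ω, steinDeriv h (W ω) ∂μ) - ∫ ω, W ω * steinSolution h (W ω) ∂μ := by
  have hWf := integrable_mul_steinSolution hc h01 hW1 hW
  have hh : Integrable (fun ω => h (W ω)) μ :=
    integrable_of_mem_Icc (hc.measurable.comp hW) fun _ => h01 _
  have hsum : Integrable (fun ω => W ω * steinSolution h (W ω) + h (W ω)) μ := hWf.add hh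
  simp only [steinDeriv]
  rw [integral_sub hsum (integrable_const _), integral_add hWf hh, integral_const, probReal_univ,
    one_smul]
  ring

variable {ι : Type*} [Fintype ι]

lemma abs_steinDeriv_sub_sum_le (w : ℝ) (x y : ι → ℝ) :
    |steinDeriv h w - ∑ i, x i * (steinSolution h w - steinSolution h (w - y i))
        - ∑ i, x i * ∫ t in 0..clip (y i), (h w - h (w - t))|
      ≤ |1 - ∑ i, x i * y i|
        + ∑ i, |x i| * (2 * |y i - clip (y i)| + (|w| + √(2 * π)) * clip (y i) ^ 2 / 2) := by
  have hsplit : steinDeriv h w - ∑ i, x i * (steinSolution h w - steinSolution h (w - y i))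
        - ∑ i, x i * ∫ t in 0..clip (y i), (h w - h (w - t))
      = (1 - ∑ i, x i * y i) * steinDeriv h w
        - ∑ i, x i * (steinSolution h w - steinSolution h (w - y i) - y i * steinDeriv h w
          + ∫ t in 0..clip (y i), (h w - h (w - t))) := by
    simp only [mul_add, mul_sub, Finset.sum_add_distrib, Finset.sum_sub_distrib, sub_mul,
      Finset.sum_mul, mul_assoc]
    ring
  rw [hsplit]
  refine (abs_sub _ _).trans (add_le_add ?_ ?_)
  · rw [abs_mul]
    exact mul_le_of_le_one_right (abs_nonneg _) (abs_steinDeriv_le_one hc.measurable h01 w)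
  · refine (Finset.abs_sum_le_sum_abs _ _).trans (Finset.sum_le_sum fun i _ => ?_)
    rw [abs_mul]
    gcongr
    exact abs_steinSolution_taylor_le hc h01 w (y i)

variable {X Y : ι → Ω → ℝ} [IsProbabilityMeasure μ]
  (hX : ∀ i, MemLp (X i) 2 μ) (hY : ∀ i, MemLp (Y i) 2 μ) (hYm : ∀ i, Measurable (Y i))
  (hWm : Measurable W) (hW : ∀ ω, W ω = ∑ i, X i ω) (hmean : ∀ i, ∫ ω, X i ω ∂μ = 0)
  (hindep : ∀ i, IndepFun (X i) (fun ω => W ω - Y i ω) μ)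

include hX hYm hWm hW hmean hindep in
lemma integral_comp_sub_integral_gaussianReal_sub_sum :
    (∫ ω, h (W ω) ∂μ) - (∫ x, h x ∂gaussianReal 0 1)
        - ∑ i, ∫ ω, X i ω * (∫ t in 0..clip (Y i ω), (h (W ω) - h (W ω - t))) ∂μ
      = ∫ ω, (steinDeriv h (W ω)
        - (∑ i, X i ω * (steinSolution h (W ω) - steinSolution h (W ω - Y i ω)))
        - ∑ i, X i ω * ∫ t in 0..clip (Y i ω), (h (W ω) - h (W ω - t))) ∂μ := by
  have hX1 (i : ι) : Integrable (X i) μ := (hX i).integrable (by norm_num)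
  have hW1 : Integrable W μ := (memLp_of_eq_sum hX hW).integrable (by norm_num)
  have hderiv := integrable_steinDeriv_comp (μ := μ) hc h01 hWm
  have hincr (i : ι) : Integrable
      (fun ω => X i ω * (steinSolution h (W ω) - steinSolution h (W ω - Y i ω))) μ := by
    simp only [mul_sub]
    exact (integrable_mul_steinSolution hc h01 (hX1 i) hWm).sub
      (integrable_mul_steinSolution hc h01 (hX1 i) (hWm.sub (hYm i)))
  have hkernel (i : ι) := integrable_mul_intervalIntegral_clip hc h01 (hX1 i) (hYm i) hWm
  have hdiff : Integrable (fun ω => steinDeriv h (W ω)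
      - ∑ i, X i ω * (steinSolution h (W ω) - steinSolution h (W ω - Y i ω))) μ :=
    hderiv.sub (integrable_finsetSum _ fun i _ => hincr i)
  rw [integral_sub hdiff (integrable_finsetSum _ fun i _ => hkernel i),
    integral_sub hderiv (integrable_finsetSum _ fun i _ => hincr i),
    integral_finsetSum _ fun i _ => hincr i, integral_finsetSum _ fun i _ => hkernel i,
    integral_comp_sub_integral_gaussianReal hc h01 hWm hW1,
    integral_mul_comp_eq_sum hX hW hmean hindep (fun i => (hYm i).aemeasurable)
      (continuous_steinSolution hc h01).measurable (abs_steinSolution_le hc.measurable h01)]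

include hX hY hYm hWm hW hmean hindep in
lemma abs_integral_comp_sub_integral_gaussianReal_le :
    |(∫ ω, h (W ω) ∂μ) - ∫ x, h x ∂gaussianReal 0 1|
      ≤ |∑ i, ∫ ω, X i ω * (∫ t in 0..clip (Y i ω), (h (W ω) - h (W ω - t))) ∂μ|
        + ((∫ ω, |1 - ∑ i, X i ω * Y i ω| ∂μ)
          + ∑ i, ∫ ω, |X i ω| * (2 * |Y i ω - clip (Y i ω)|
            + (|W ω| + √(2 * π)) * clip (Y i ω) ^ 2 / 2) ∂μ) := by
  have hXY : Integrable (fun ω => |1 - ∑ i, X i ω * Y i ω|) μ :=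
    ((integrable_const 1).sub
      (integrable_finsetSum _ fun i _ => (hX i).integrable_mul (hY i))).abs
  have hrem (i : ι) := integrable_abs_mul_clip_remainder (hX i) (hY i) (memLp_of_eq_sum hX hW)
    (√(2 * π))
  have hsum := hXY.add (integrable_finsetSum Finset.univ fun i _ => hrem i)
  refine (sub_le_iff_le_add'.1 (abs_sub_abs_le_abs_sub _ _)).trans (add_le_add_right ?_ _)
  rw [integral_comp_sub_integral_gaussianReal_sub_sum hc h01 hX hYm hWm hW hmean hindep,
    ← integral_finsetSum _ fun i _ => hrem i,
    ← integral_add hXY (integrable_finsetSum _ fun i _ => hrem i)]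
  refine abs_integral_le_integral_abs.trans <|
    integral_mono_of_nonneg (.of_forall fun _ => abs_nonneg _) hsum (.of_forall fun ω => ?_)
  exact abs_steinDeriv_sub_sum_le hc h01 (W ω) (X · ω) (Y · ω)

end SteinBound

section AbsoluteMoments

variable {Ω : Type*} [MeasurableSpace Ω] {μ : Measure Ω} {X : Ω → ℝ} {p q : ℝ}

lemma integrable_abs_rpow_iff_memLp (hX : AEStronglyMeasurable X μ) (hp : 0 < p) :
    Integrable (fun ω => |X ω| ^ p) μ ↔ MemLp X (ENNReal.ofReal p) μ := by
  simpa [ENNReal.toReal_ofReal hp.le] using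
    integrable_norm_rpow_iff hX (p := ENNReal.ofReal p) (by simpa using hp) (by simp)

variable [IsFiniteMeasure μ]

lemma memLp_two_of_integrable_abs_rpow (hX : AEStronglyMeasurable X μ) (hp : 2 ≤ p)
    (hXp : Integrable (fun ω => |X ω| ^ p) μ) : MemLp X 2 μ :=
  ((integrable_abs_rpow_iff_memLp hX (by linarith)).1 hXp).mono_exponent
    (by simpa using ENNReal.ofReal_le_ofReal hp)

lemma integrable_abs_rpow_of_le (hX : AEStronglyMeasurable X μ) (hq : 0 < q) (hqp : q ≤ p)
    (hXp : Integrable (fun ω => |X ω| ^ p) μ) : Integrable (fun ω => |X ω| ^ q) μ :=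
  (integrable_abs_rpow_iff_memLp hX hq).2 <|
    ((integrable_abs_rpow_iff_memLp hX (hq.trans_le hqp)).1 hXp).mono_exponent
      (ENNReal.ofReal_le_ofReal hqp)

end AbsoluteMoments

section LocalDependence

variable {Ω : Type*} {ι : Type*}

/-- The neighbourhood sum `Yᵢ = ∑ j ∈ Aᵢ, Xⱼ`. -/
def nbhdSum (X : ι → Ω → ℝ) (A : ι → Finset ι) (i : ι) (ω : Ω) : ℝ :=
  ∑ j ∈ A i, X j ω

variable [MeasurableSpace Ω] {μ : Measure Ω} {X : ι → Ω → ℝ} {A B : ι → Finset ι}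

lemma measurable_nbhdSum (hX : ∀ i, Measurable (X i)) (i : ι) : Measurable (nbhdSum X A i) :=
  Finset.measurable_fun_sum _ fun j _ => hX j

lemma integrable_abs_nbhdSum_rpow {q : ℝ} (hX : ∀ i, Measurable (X i)) (hq : 0 < q)
    (hXq : ∀ i, Integrable (fun ω => |X i ω| ^ q) μ) (i : ι) :
    Integrable (fun ω => |nbhdSum X A i ω| ^ q) μ :=
  (integrable_abs_rpow_iff_memLp (measurable_nbhdSum hX i).aestronglyMeasurable hq).2 <|
    memLp_finsetSum _ fun j _ =>
      (integrable_abs_rpow_iff_memLp (hX j).aestronglyMeasurable hq).1 (hXq j)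

variable [Fintype ι]

lemma measurable_of_eq_sum {W : Ω → ℝ} (hX : ∀ i, Measurable (X i))
    (hW : ∀ ω, W ω = ∑ i, X i ω) : Measurable W := by
  rw [funext hW]
  exact Finset.measurable_fun_sum _ fun i _ => hX i

variable [DecidableEq ι]

/-- The set `N(Bᵢ)` of the indices `j` for which `Bⱼ` meets `Bᵢ`. -/
def overlapNbhd (B : ι → Finset ι) (i : ι) : Finset ι :=
  Finset.univ.filter fun j => (B j ∩ B i).Nonempty

lemma mem_overlapNbhd {i j : ι} : j ∈ overlapNbhd B i ↔ (B j ∩ B i).Nonempty := by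
  simp [overlapNbhd]

lemma mem_overlapNbhd_comm (i j : ι) : j ∈ overlapNbhd B i ↔ i ∈ overlapNbhd B j := by
  rw [mem_overlapNbhd, mem_overlapNbhd, Finset.inter_comm]

/-- The local dependence condition (LD1): every `Xᵢ` is independent of the family of all `Xⱼ` with
`j` outside the neighbourhood `Aᵢ` of `i`. -/
structure LD1 (X : ι → Ω → ℝ) (A : ι → Finset ι) (μ : Measure Ω) : Prop where
  mem_self : ∀ i, i ∈ A i
  indepFun : ∀ i, IndepFun (X i) (fun ω => fun j : ((A i)ᶜ : Finset ι) => X j.1 ω) μ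

/-- The local dependence condition (LD2): in addition to (LD1), the whole family indexed by `Aᵢ` is
independent of the family indexed by the complement of a larger neighbourhood `Bᵢ`. -/
structure LD2 (X : ι → Ω → ℝ) (A B : ι → Finset ι) (μ : Measure Ω) : Prop
    extends LD1 X A μ where
  subset : ∀ i, A i ⊆ B i
  indepFun_family : ∀ i, IndepFun (fun ω => fun j : (A i : Finset ι) => X j.1 ω)
    (fun ω => fun j : ((B i)ᶜ : Finset ι) => X j.1 ω) μ

lemma LD1.indepFun_sub_nbhdSum (h : LD1 X A μ) {W : Ω → ℝ} (hW : ∀ ω, W ω = ∑ i, X i ω) (i : ι) :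
    IndepFun (X i) (fun ω => W ω - nbhdSum X A i ω) μ := by
  have hcompl : (fun ω => W ω - nbhdSum X A i ω) = fun ω => ∑ l : ((A i)ᶜ : Finset ι), X l ω := by
    ext ω
    rw [hW, ← Finset.sum_add_sum_compl (A i), nbhdSum, add_sub_cancel_left]
    exact (Finset.sum_coe_sort (A i)ᶜ (X · ω)).symm
  rw [hcompl]
  exact (h.indepFun i).comp (φ := id) (ψ := fun v : ((A i)ᶜ : Finset ι) → ℝ => ∑ l, v l)
    measurable_id (by fun_prop)

namespace LD2

lemma indepFun_prod_nbhdSum (h : LD2 X A B μ) {i j : ι} (hij : j ∉ overlapNbhd B i) :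
    IndepFun (fun ω => (X i ω, nbhdSum X A i ω)) (fun ω => (X j ω, nbhdSum X A j ω)) μ := by
  have hsub {l : ι} (hl : l ∈ A j) : l ∈ (B i)ᶜ := Finset.mem_compl.2 fun hl' =>
    hij <| mem_overlapNbhd.2 ⟨l, Finset.mem_inter.2 ⟨h.subset j hl, hl'⟩⟩
  convert (h.indepFun_family i).comp (φ := fun v => (v ⟨i, h.mem_self i⟩, ∑ l, v l))
    (ψ := fun v => (v ⟨j, hsub (h.mem_self j)⟩, ∑ l : (A j : Finset ι), v ⟨l, hsub l.2⟩))
    (by fun_prop) (by fun_prop) using 2 with ω ω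
  · exact congrArg _ (Finset.sum_coe_sort (A i) (X · ω)).symm
  · exact congrArg _ (Finset.sum_coe_sort (A j) (X · ω)).symm

lemma indepFun_prod_nbhdSum_sum_compl (h : LD2 X A B μ) (i : ι) :
    IndepFun (fun ω => (X i ω, nbhdSum X A i ω)) (fun ω => ∑ l ∈ (B i)ᶜ, X l ω) μ := by
  convert (h.indepFun_family i).comp (φ := fun v => (v ⟨i, h.mem_self i⟩, ∑ l, v l))
    (ψ := fun v => ∑ l, v l) (by fun_prop) (by fun_prop) using 2 with ω ω
  · exact congrArg _ (Finset.sum_coe_sort (A i) (X · ω)).symm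
  · exact (Finset.sum_coe_sort (B i)ᶜ (X · ω)).symm

lemma card_le_card_overlapNbhd (h : LD2 X A B μ) (i : ι) :
    (B i).card ≤ (overlapNbhd B i).card :=
  Finset.card_le_card fun j hj => mem_overlapNbhd.2
    ⟨j, Finset.mem_inter.2 ⟨h.subset j (h.mem_self j), hj⟩⟩

lemma card_filter_mem_le_card_overlapNbhd (h : LD2 X A B μ) (l : ι) :
    (Finset.univ.filter fun i => l ∈ B i).card ≤ (overlapNbhd B l).card :=
  Finset.card_le_card fun _ hi => mem_overlapNbhd.2
    ⟨l, Finset.mem_inter.2 ⟨(Finset.mem_filter.1 hi).2, h.subset l (h.mem_self l)⟩⟩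

end LD2

end LocalDependence

section DoubleCounting

variable {ι : Type*} [Fintype ι] [DecidableEq ι]

lemma sum_sum_mem_add_le {B : ι → Finset ι} {κ : ℕ} (hB : ∀ i, (B i).card ≤ κ)
    (hB' : ∀ l, (Finset.univ.filter fun i => l ∈ B i).card ≤ κ) {a b : ι → ℝ} (ha : 0 ≤ a)
    (hb : 0 ≤ b) : ∑ i, ∑ l ∈ B i, (a l + b i) ≤ κ * ∑ i, (a i + b i) := by
  have hswap : ∑ i, ∑ l ∈ B i, a l = ∑ l, ∑ _i ∈ Finset.univ.filter (fun i => l ∈ B i), a l :=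
    Finset.sum_comm' fun i l => by simp
  simp only [Finset.sum_add_distrib, hswap, Finset.sum_const, nsmul_eq_mul, mul_add,
    Finset.mul_sum]
  gcongr with l _ i _
  · exact ha l
  · exact hB' l
  · exact hb i
  · exact hB i

end DoubleCounting

section WeightedAbs

variable {Ω : Type*} [MeasurableSpace Ω] {μ : Measure Ω}

lemma integral_abs_le_one_of_integral_sq_eq_one [IsProbabilityMeasure μ] {W : Ω → ℝ}
    (hW : MemLp W 2 μ) (hW1 : ∫ ω, W ω ^ 2 ∂μ = 1) : ∫ ω, |W ω| ∂μ ≤ 1 := by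
  simpa [hW1] using integral_abs_mul_le_sqrt_mul_sqrt hW (memLp_const (1 : ℝ))

lemma integral_abs_mul_le_of_indepFun {W R T V : Ω → ℝ} (hW : Integrable W μ)
    (hR : Integrable R μ) (hT : Integrable T μ) (hV : Integrable V μ)
    (hTV : Integrable (fun ω => T ω * V ω) μ) (hV0 : 0 ≤ V) (hWR : ∀ ω, |W ω - R ω| ≤ T ω)
    (hind : IndepFun R V μ) :
    ∫ ω, |W ω| * V ω ∂μ
      ≤ (∫ ω, |W ω| ∂μ) * ∫ ω, V ω ∂μ
        + ((∫ ω, T ω ∂μ) * ∫ ω, V ω ∂μ + ∫ ω, T ω * V ω ∂μ) := by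
  have hindabs : IndepFun (fun ω => |R ω|) V μ := hind.comp measurable_abs measurable_id
  have hRV : Integrable (fun ω => |R ω| * V ω) μ := hindabs.integrable_mul hR.abs hV
  have hRabs : ∫ ω, |R ω| ∂μ ≤ (∫ ω, |W ω| ∂μ) + ∫ ω, T ω ∂μ :=
    integral_le_add_of_le_add (fun _ => abs_nonneg _) hW.abs hT fun ω => by
      linarith [abs_sub_abs_le_abs_sub (R ω) (W ω), abs_sub_comm (R ω) (W ω), hWR ω]
  have hWV : ∫ ω, |W ω| * V ω ∂μ ≤ (∫ ω, |R ω| * V ω ∂μ) + ∫ ω, T ω * V ω ∂μ :=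
    integral_le_add_of_le_add (fun ω => mul_nonneg (abs_nonneg _) (hV0 ω)) hRV hTV fun ω => by
      rw [← add_mul]
      exact mul_le_mul_of_nonneg_right
        (by linarith [abs_sub_abs_le_abs_sub (W ω) (R ω), hWR ω]) (hV0 ω)
  rw [hindabs.integral_fun_mul_eq_mul_integral hR.1.norm hV.1] at hWV
  linarith [mul_le_mul_of_nonneg_right hRabs (integral_nonneg (μ := μ) hV0)]

end WeightedAbs

section ClippedProducts

variable {Ω : Type*} [MeasurableSpace Ω] {μ : Measure Ω} {ι : Type*} [Fintype ι]
  {X Y : ι → Ω → ℝ} {q : ℝ}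

lemma two_mul_integral_abs_sum_sub_sum_clip_le (hXY : ∀ i, Integrable (fun ω => X i ω * Y i ω) μ)
    (hclip : ∀ i, Integrable (fun ω => clip (X i ω * Y i ω)) μ)
    (hX : ∀ i, Integrable (fun ω => |X i ω| ^ q) μ)
    (hY : ∀ i, Integrable (fun ω => |Y i ω| ^ q) μ) (hq : 2 ≤ q) :
    2 * ∫ ω, |∑ i, X i ω * Y i ω - ∑ i, clip (X i ω * Y i ω)| ∂μ ≤ absMomentSum X Y q μ := by
  have hdiff (i : ι) : Integrable (fun ω => |X i ω * Y i ω - clip (X i ω * Y i ω)|) μ :=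
    ((hXY i).sub (hclip i)).abs
  calc 2 * ∫ ω, |∑ i, X i ω * Y i ω - ∑ i, clip (X i ω * Y i ω)| ∂μ
      ≤ 2 * ∫ ω, ∑ i, |X i ω * Y i ω - clip (X i ω * Y i ω)| ∂μ := by
        refine mul_le_mul_of_nonneg_left (integral_mono_of_nonneg (.of_forall fun _ => abs_nonneg _)
          (integrable_finsetSum _ fun i _ => hdiff i) (.of_forall fun ω => ?_)) zero_le_two
        simpa only [← Finset.sum_sub_distrib] using Finset.abs_sum_le_sum_abs _ _
    _ = ∑ i, 2 * ∫ ω, |X i ω * Y i ω - clip (X i ω * Y i ω)| ∂μ := by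
        rw [integral_finsetSum _ fun i _ => hdiff i, Finset.mul_sum]
    _ ≤ absMomentSum X Y q μ :=
        Finset.sum_le_sum fun i _ => two_mul_integral_abs_mul_sub_clip_le (hX i) (hY i) hq

end ClippedProducts

namespace LD2

variable {Ω : Type*} [MeasurableSpace Ω] {μ : Measure Ω} [IsProbabilityMeasure μ]
  {ι : Type*} [Fintype ι] [DecidableEq ι] {X : ι → Ω → ℝ} {A B : ι → Finset ι} {W : Ω → ℝ}
  {κ : ℕ} {p q : ℝ}

lemma variance_sum_comp_le (hLD : LD2 X A B μ) (hκ : ∀ i, (overlapNbhd B i).card ≤ κ)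
    {φ : ℝ × ℝ → ℝ} (hφ : Measurable φ)
    (hmem : ∀ i, MemLp (fun ω => φ (X i ω, nbhdSum X A i ω)) 2 μ) :
    Var[fun ω => ∑ i, φ (X i ω, nbhdSum X A i ω); μ]
      ≤ κ * ∑ i, ∫ ω, φ (X i ω, nbhdSum X A i ω) ^ 2 ∂μ :=
  variance_sum_le_of_indepFun_off hmem mem_overlapNbhd_comm
    (fun _ _ hij => (hLD.indepFun_prod_nbhdSum hij).comp hφ hφ) hκ

variable (hLD : LD2 X A B μ) (hX : ∀ i, Measurable (X i)) (hq2 : 2 ≤ q)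
  (hXq : ∀ i, Integrable (fun ω => |X i ω| ^ q) μ)
include hLD hX hq2 hXq

lemma integral_abs_total_mul_clip_sq_le (hq4 : q ≤ 4) (hW : ∀ ω, W ω = ∑ i, X i ω)
    (hW1 : ∫ ω, W ω ^ 2 ∂μ = 1) (i : ι) :
    ∫ ω, |W ω| * (|X i ω| * clip (nbhdSum X A i ω) ^ 2) ∂μ
      ≤ (∫ ω, |X i ω| * clip (nbhdSum X A i ω) ^ 2 ∂μ)
        + 2 * ∑ l ∈ B i, ((∫ ω, |X l ω| ^ q ∂μ)
          + ((∫ ω, |X i ω| ^ q ∂μ) + ∫ ω, |nbhdSum X A i ω| ^ q ∂μ)) := by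
  have hX2 (i : ι) : MemLp (X i) 2 μ :=
    memLp_two_of_integrable_abs_rpow (hX i).aestronglyMeasurable hq2 (hXq i)
  have hX1 (i : ι) : Integrable (X i) μ := (hX2 i).integrable (by norm_num)
  have hYm := (measurable_nbhdSum (A := A) hX i).aemeasurable (μ := μ)
  have hYq := integrable_abs_nbhdSum_rpow (A := A) hX (by linarith) hXq i
  have hW2 : MemLp W 2 μ := memLp_of_eq_sum hX2 hW
  have hV := integrable_mul_clip_sq (hX1 i).abs hYm
  have hXV (l : ι) : Integrable (fun ω => |X l ω| * (|X i ω| * clip (nbhdSum X A i ω) ^ 2)) μ :=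
    integrable_abs_mul_abs_mul_clip_sq (hX2 l) (hX2 i) hYm
  have hind : IndepFun (fun ω => ∑ l ∈ (B i)ᶜ, X l ω)
      (fun ω => |X i ω| * clip (nbhdSum X A i ω) ^ 2) μ :=
    ((hLD.indepFun_prod_nbhdSum_sum_compl i).symm).comp measurable_id
      (ψ := fun v : ℝ × ℝ => |v.1| * clip v.2 ^ 2)
      (measurable_fst.abs.mul ((continuous_clip.measurable.comp measurable_snd).pow_const 2))
  have hbound := integral_abs_mul_le_of_indepFun (T := fun ω => ∑ l ∈ B i, |X l ω|)
    (hW2.integrable (by norm_num)) (integrable_finsetSum _ fun l _ => hX1 l)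
    (integrable_finsetSum _ fun l _ => (hX1 l).abs) hV
    (by simpa only [Finset.sum_mul] using integrable_finsetSum _ fun l _ => hXV l)
    (fun ω => by positivity) (fun ω => by
      rw [hW, ← Finset.sum_add_sum_compl (B i), add_sub_cancel_right]
      exact Finset.abs_sum_le_sum_abs _ _) hind
  simp only [Finset.sum_mul, integral_finsetSum _ fun l _ => hXV l,
    integral_finsetSum _ fun l _ => (hX1 l).abs, ← Finset.sum_add_distrib] at hbound
  refine hbound.trans (add_le_add ?_ ?_)
  · exact mul_le_of_le_one_left (by positivity)
      (integral_abs_le_one_of_integral_sq_eq_one hW2 hW1)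
  · rw [Finset.mul_sum]
    refine Finset.sum_le_sum fun l _ => ?_
    linarith [integral_abs_mul_abs_mul_clip_sq_le (hXq i) hYq (hXq l) hq2 hq4,
      integral_abs_mul_integral_abs_mul_clip_sq_le (hXq i) hYq (hXq l) hq2 hq4]

variable (hκ : ∀ i, (overlapNbhd B i).card ≤ κ)
include hκ

lemma integral_abs_one_sub_sum_mul_nbhdSum_le (hp0 : 0 < p) (hp4 : p ≤ 4)
    (hXp : ∀ i, Integrable (fun ω => |X i ω| ^ p) μ)
    (hone : ∑ i, ∫ ω, X i ω * nbhdSum X A i ω ∂μ = 1) :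
    ∫ ω, |1 - ∑ i, X i ω * nbhdSum X A i ω| ∂μ
      ≤ absMomentSum X (nbhdSum X A) q μ
        + √(κ * absMomentSum X (nbhdSum X A) p μ / 2) := by
  have hY (i : ι) : Measurable (nbhdSum X A i) := measurable_nbhdSum hX i
  have hYq := integrable_abs_nbhdSum_rpow (A := A) hX (by linarith) hXq
  have hYp := integrable_abs_nbhdSum_rpow (A := A) hX hp0 hXp
  have hXY (i : ι) : Integrable (fun ω => X i ω * nbhdSum X A i ω) μ :=
    (memLp_two_of_integrable_abs_rpow (hX i).aestronglyMeasurable hq2 (hXq i)).integrable_mul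
      (memLp_two_of_integrable_abs_rpow (hY i).aestronglyMeasurable hq2 (hYq i))
  have hclip (i : ι) : MemLp (fun ω => clip (X i ω * nbhdSum X A i ω)) 2 μ :=
    .of_bound (continuous_clip.measurable.comp ((hX i).mul (hY i))).aestronglyMeasurable 1
      (.of_forall fun _ => abs_clip_le_one _)
  have hvar : Var[fun ω => ∑ i, clip (X i ω * nbhdSum X A i ω); μ]
      ≤ κ * absMomentSum X (nbhdSum X A) p μ / 2 := by
    refine (hLD.variance_sum_comp_le hκ (φ := fun v => clip (v.1 * v.2))
      (continuous_clip.measurable.comp (by fun_prop)) hclip).trans ?_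
    rw [mul_div_assoc, absMomentSum, Finset.sum_div]
    gcongr with i
    linarith [two_mul_integral_clip_mul_sq_le (hXp i) (hYp i) hp0.le hp4]
  have hbound := integral_abs_sub_integral_le (integrable_finsetSum Finset.univ fun i _ => hXY i)
    (memLp_finsetSum Finset.univ fun i _ => hclip i)
  rw [integral_finsetSum _ fun i _ => hXY i, hone] at hbound
  simp only [abs_sub_comm (1 : ℝ)]
  linarith [sqrt_le_sqrt hvar,
    two_mul_integral_abs_sum_sub_sum_clip_le hXY (fun i => (hclip i).integrable (by norm_num))
      hXq hYq hq2]

lemma sum_integral_abs_total_mul_clip_sq_le (hq4 : q ≤ 4)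
    (hW : ∀ ω, W ω = ∑ i, X i ω) (hW1 : ∫ ω, W ω ^ 2 ∂μ = 1) :
    ∑ i, ∫ ω, |W ω| * (|X i ω| * clip (nbhdSum X A i ω) ^ 2) ∂μ
      ≤ (∑ i, ∫ ω, |X i ω| * clip (nbhdSum X A i ω) ^ 2 ∂μ)
        + 4 * κ * absMomentSum X (nbhdSum X A) q μ := by
  have hcount := sum_sum_mem_add_le (fun i => (hLD.card_le_card_overlapNbhd i).trans (hκ i))
    (fun l => (hLD.card_filter_mem_le_card_overlapNbhd l).trans (hκ l))
    (a := fun l => ∫ ω, |X l ω| ^ q ∂μ)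
    (b := fun i => (∫ ω, |X i ω| ^ q ∂μ) + ∫ ω, |nbhdSum X A i ω| ^ q ∂μ)
    (fun _ => by positivity) (fun _ => by positivity)
  have hsum := Finset.sum_le_sum fun i (_ : i ∈ Finset.univ) =>
    hLD.integral_abs_total_mul_clip_sq_le hX hq2 hXq hq4 hW hW1 i
  rw [Finset.sum_add_distrib, ← Finset.mul_sum] at hsum
  rw [Finset.sum_add_distrib, ← absMomentSum] at hcount
  have hfst := mul_le_mul_of_nonneg_left
    (sum_integral_abs_rpow_le_absMomentSum (X := X) (Y := nbhdSum X A) (q := q) (μ := μ))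
    (Nat.cast_nonneg (α := ℝ) κ)
  linarith

variable (hq3 : q ≤ 3)
include hq3

lemma sum_integral_abs_mul_clip_remainder_le (hW : ∀ ω, W ω = ∑ i, X i ω)
    (hW1 : ∫ ω, W ω ^ 2 ∂μ = 1) :
    ∑ i, ∫ ω, |X i ω| * (2 * |nbhdSum X A i ω - clip (nbhdSum X A i ω)|
        + (|W ω| + √(2 * π)) * clip (nbhdSum X A i ω) ^ 2 / 2) ∂μ
      ≤ (2 + 2 * κ) * absMomentSum X (nbhdSum X A) q μ
        - 0.2 * ∑ i, ∫ ω, |X i ω| * clip (nbhdSum X A i ω) ^ 2 ∂μ := by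
  have hX2 (i : ι) : MemLp (X i) 2 μ :=
    memLp_two_of_integrable_abs_rpow (hX i).aestronglyMeasurable hq2 (hXq i)
  have hYq := integrable_abs_nbhdSum_rpow (A := A) hX (by linarith) hXq
  have hY2 (i : ι) : MemLp (nbhdSum X A i) 2 μ := memLp_two_of_integrable_abs_rpow
    (measurable_nbhdSum hX i).aestronglyMeasurable hq2 (hYq i)
  have hclip : ∑ i, ∫ ω, |X i ω| * (clip (nbhdSum X A i ω) ^ 2
      + |nbhdSum X A i ω - clip (nbhdSum X A i ω)|) ∂μ ≤ absMomentSum X (nbhdSum X A) q μ :=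
    Finset.sum_le_sum fun i _ =>
      integral_abs_mul_clip_sq_add_abs_sub_clip_le (hXq i) (hYq i) hq2 hq3
  have hsqrt : (√(2 * π) / 2 - 2) * ∑ i, ∫ ω, |X i ω| * clip (nbhdSum X A i ω) ^ 2 ∂μ
      ≤ (1.3 - 2) * ∑ i, ∫ ω, |X i ω| * clip (nbhdSum X A i ω) ^ 2 ∂μ := by
    gcongr
    linarith [sqrt_two_mul_pi_mem_Icc.2]
  simp only [integral_abs_mul_clip_remainder (hX2 _) (hY2 _) (memLp_of_eq_sum hX2 hW),
    Finset.sum_add_distrib, ← Finset.mul_sum, ← Finset.sum_div]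
  linarith [hLD.sum_integral_abs_total_mul_clip_sq_le hX hq2 hXq hκ (by linarith) hW hW1]

variable (hp2 : 2 ≤ p) (hp4 : p ≤ 4) (hXp : ∀ i, Integrable (fun ω => |X i ω| ^ p) μ)
include hp2 hp4 hXp

lemma abs_sum_integral_mul_intervalIntegral_clip_le {z α c η : ℝ} (hW : Measurable W) (hα : 0 < α)
    (hconc : ∀ x s, |cdf (μ.map W) (x + s) - cdf (μ.map W) x| ≤ c * |s| + η)
    (hc : 0 ≤ c) (hη : 0 ≤ η) :
    |∑ i, ∫ ω, X i ω * (∫ t in 0..clip (nbhdSum X A i ω),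
        (ramp z α (W ω) - ramp z α (W ω - t))) ∂μ|
      ≤ (c + η / α) * (∑ i, ∫ ω, |X i ω| * clip (nbhdSum X A i ω) ^ 2 ∂μ) / 2
        + √(κ * (c * absMomentSum X (nbhdSum X A) p μ
          + 2 * η * absMomentSum X (nbhdSum X A) q μ)) := by
  have hX2 (i : ι) : MemLp (X i) 2 μ :=
    memLp_two_of_integrable_abs_rpow (hX i).aestronglyMeasurable hq2 (hXq i)
  have hC (i : ι) : Measurable fun ω => clip (nbhdSum X A i ω) :=
    continuous_clip.measurable.comp (measurable_nbhdSum hX i)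
  have hvar (t : ℝ) := hLD.variance_sum_comp_le hκ
    (φ := fun v => v.1 * stepKernel (clip v.2) t)
    (measurable_fst.mul (measurable_stepKernel.comp
      ((continuous_clip.measurable.comp measurable_snd).prodMk measurable_const)))
    fun i => memLp_mul_stepKernel (hX2 i) (hC i) t
  have hsq : ∑ i, ∫ ω, X i ω ^ 2 * clip (nbhdSum X A i ω) ^ 2 ∂μ
      ≤ absMomentSum X (nbhdSum X A) p μ := Finset.sum_le_sum fun i _ => by
    simpa only [sq_abs] using integral_sq_mul_abs_clip_pow_le (n := 2) (hXp i)
      (integrable_abs_nbhdSum_rpow hX (by linarith) hXp i) hp2 (by push_cast; linarith)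
  have habs : ∑ i, ∫ ω, X i ω ^ 2 * |clip (nbhdSum X A i ω)| ∂μ
      ≤ absMomentSum X (nbhdSum X A) q μ := Finset.sum_le_sum fun i _ => by
    simpa only [pow_one] using integral_sq_mul_abs_clip_pow_le (n := 1) (hXq i)
      (integrable_abs_nbhdSum_rpow hX (by linarith) hXq i) hq2 (by push_cast; linarith)
  refine (abs_sum_integral_mul_intervalIntegral_ramp_sub_le hW hα hconc hX2 hC hvar hc hη
    κ.cast_nonneg fun _ _ => abs_clip_le_one _).trans ?_
  simp only [← mul_div_assoc, integral_div, ← Finset.sum_div]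
  rw [← sqrt_mul zero_le_two]
  refine add_le_add le_rfl (sqrt_le_sqrt ?_)
  rw [mul_left_comm]
  refine mul_le_mul_of_nonneg_left ?_ κ.cast_nonneg
  linarith [mul_le_mul_of_nonneg_left hsq hc, mul_le_mul_of_nonneg_left habs hη]

lemma abs_integral_ramp_sub_le {z α δ : ℝ} (hmean : ∀ i, ∫ ω, X i ω ∂μ = 0)
    (hW : ∀ ω, W ω = ∑ i, X i ω) (hW1 : ∫ ω, W ω ^ 2 ∂μ = 1) (hα : 0 < α)
    (hαq : 8 * absMomentSum X (nbhdSum X A) q μ ≤ α)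
    (hδ : ∀ x, |cdf (μ.map W) x - cdf (gaussianReal 0 1) x| ≤ δ) :
    |∫ w, ramp z α w ∂μ.map W - ∫ w, ramp z α w ∂gaussianReal 0 1|
      ≤ (3 + 2 * κ) * absMomentSum X (nbhdSum X A) q μ
        + √(κ * absMomentSum X (nbhdSum X A) p μ / 2) + δ / 8
        + √(κ * (0.4 * absMomentSum X (nbhdSum X A) p μ
          + 2 * (2 * δ) * absMomentSum X (nbhdSum X A) q μ)) := by
  have hδ0 : 0 ≤ δ := (abs_nonneg _).trans (hδ 0)
  have hX2 (i : ι) : MemLp (X i) 2 μ :=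
    memLp_two_of_integrable_abs_rpow (hX i).aestronglyMeasurable hq2 (hXq i)
  have hYm : ∀ i, Measurable (nbhdSum X A i) := measurable_nbhdSum hX
  have hYq := integrable_abs_nbhdSum_rpow (A := A) hX (by linarith) hXq
  have hY2 (i : ι) : MemLp (nbhdSum X A i) 2 μ :=
    memLp_two_of_integrable_abs_rpow (hYm i).aestronglyMeasurable hq2 (hYq i)
  have hWm := measurable_of_eq_sum hX hW
  have hindep := hLD.indepFun_sub_nbhdSum hW
  have hone := (sum_integral_mul_eq_integral_sq hX2 hW hmean hindep hY2).trans hW1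
  have hstein := abs_integral_comp_sub_integral_gaussianReal_le (continuous_ramp z α)
    (ramp_mem_Icc hα) hX2 hY2 hYm hWm hW hmean hindep
  have hkernel := hLD.abs_sum_integral_mul_intervalIntegral_clip_le (z := z) hX hq2 hXq hκ hq3
    hp2 hp4 hXp hWm hα (abs_add_sub_le_of_abs_sub_le abs_cdf_gaussianReal_sub_le hδ) (by norm_num)
    (by positivity)
  have hlinear := hLD.integral_abs_one_sub_sum_mul_nbhdSum_le hX hq2 hXq hκ (by linarith) hp4 hXp
    hone
  have hremainder := hLD.sum_integral_abs_mul_clip_remainder_le hX hq2 hXq hκ hq3 hW hW1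
  have hsmooth : 2 * δ / α * (∑ i, ∫ ω, |X i ω| * clip (nbhdSum X A i ω) ^ 2 ∂μ) ≤ δ / 4 := by
    have hsum : ∑ i, ∫ ω, |X i ω| * clip (nbhdSum X A i ω) ^ 2 ∂μ
        ≤ absMomentSum X (nbhdSum X A) q μ := Finset.sum_le_sum fun i _ =>
      integral_abs_mul_clip_sq_le (hXq i) (hYq i) (by linarith) hq3
    rw [div_mul_eq_mul_div, div_le_iff₀ hα]
    nlinarith
  rw [integral_map hWm.aemeasurable (continuous_ramp z α).aestronglyMeasurable]
  linarith

end LD2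

section SelfBounding

lemma le_of_self_bound {β γ κ δ ε : ℝ} (hβ : 0 ≤ β) (hγ : 0 ≤ γ) (hκ : 0 ≤ κ) (hδ : 0 ≤ δ)
    (h : δ ≤ 0.4 * (8 * β + ε) + ((3 + 2 * κ) * β + √(κ * γ / 2) + δ / 8
      + √(κ * (0.4 * γ + 2 * (2 * δ) * β)))) (hε : 0 ≤ ε) :
    δ ≤ (13 + 11 * κ) * β + 2.5 * √(κ * γ) + ε := by
  have hsq : √(κ * γ) ^ 2 = κ * γ := sq_sqrt (by positivity)
  have hs := sqrt_nonneg (κ * γ)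
  have hκβ : 0 ≤ κ * β := by positivity
  have hhalf : √(κ * γ / 2) ≤ 0.7072 * √(κ * γ) :=
    sqrt_le_iff.2 ⟨by positivity, by nlinarith⟩
  have hmix : √(κ * (0.4 * γ + 2 * (2 * δ) * β)) ≤ 0.633 * √(κ * γ) + δ / 4 + 4 * (κ * β) := by
    refine sqrt_le_iff.2 ⟨by positivity, ?_⟩
    nlinarith [sq_nonneg (δ / 4 - 4 * (κ * β)), mul_nonneg hs hδ, mul_nonneg hs hκβ]
  linarith

end SelfBounding

theorem stmt_1_general {Ω : Type*} [MeasurableSpace Ω] {μ : Measure Ω} [IsProbabilityMeasure μ]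
    {ι : Type*} [Fintype ι] [DecidableEq ι] {X : ι → Ω → ℝ} {A B : ι → Finset ι} {W : Ω → ℝ}
    {κ : ℕ} {p q : ℝ} (hLD : LD2 X A B μ) (hκ : ∀ i, (overlapNbhd B i).card ≤ κ)
    (hX : ∀ i, Measurable (X i)) (hmean : ∀ i, ∫ ω, X i ω ∂μ = 0)
    (hq2 : 2 ≤ q) (hq3 : q ≤ 3) (hXq : ∀ i, Integrable (fun ω => |X i ω| ^ q) μ)
    (hp2 : 2 ≤ p) (hp4 : p ≤ 4) (hXp : ∀ i, Integrable (fun ω => |X i ω| ^ p) μ)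
    (hW : ∀ ω, W ω = ∑ i, X i ω) (hW1 : ∫ ω, W ω ^ 2 ∂μ = 1) (z : ℝ) :
    |(μ {ω | W ω ≤ z}).toReal - stdGaussianCDF z|
      ≤ (13 + 11 * κ) * absMomentSum X (nbhdSum X A) q μ
        + 2.5 * √(κ * absMomentSum X (nbhdSum X A) p μ) := by
  have hWm := measurable_of_eq_sum hX hW
  have : IsProbabilityMeasure (μ.map W) := Measure.isProbabilityMeasure_map hWm.aemeasurable
  have hF : (μ {ω | W ω ≤ z}).toReal = cdf (μ.map W) z := by
    rw [cdf_eq_real, map_measureReal_apply hWm measurableSet_Iic]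
    rfl
  have hbdd : BddAbove (Set.range fun x => |cdf (μ.map W) x - cdf (gaussianReal 0 1) x|) :=
    ⟨1, Set.forall_mem_range.2 fun x => abs_sub_le_of_nonneg_of_le (cdf_nonneg _ x)
      (cdf_le_one _ x) (cdf_nonneg _ x) (cdf_le_one _ x)⟩
  have hδ := le_ciSup hbdd
  have hβ : 0 ≤ absMomentSum X (nbhdSum X A) q μ := absMomentSum_nonneg
  rw [hF, stdGaussianCDF_eq_cdf]
  refine (hδ z).trans (le_of_forall_pos_le_add fun ε hε => ?_)
  refine le_of_self_bound hβ absMomentSum_nonneg κ.cast_nonneg ((abs_nonneg _).trans (hδ 0))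
    (ciSup_le fun x => ?_) hε.le
  exact abs_cdf_sub_cdf_le_of_ramp (by positivity) abs_cdf_gaussianReal_sub_le
    (fun y => hLD.abs_integral_ramp_sub_le hX hq2 hXq hκ hq3 hp2 hp4 hXp hmean hW hW1
      (by positivity) (by linarith) hδ) x

theorem stmt_1
    {Ω : Type*} [MeasurableSpace Ω] {μ : Measure Ω} [IsProbabilityMeasure μ]
    {ι : Type*} [Fintype ι] [DecidableEq ι]
    (p : ℝ) (hp : 2 < p ∧ p ≤ 4)
    (X : ι → Ω → ℝ) (A B : ι → Finset ι)
    (hXmeas : ∀ i, Measurable (X i))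
    (hXmean : ∀ i, ∫ ω, X i ω ∂μ = 0)
    (hXsq : ∀ i, Integrable (fun ω => (X i ω) ^ 2) μ)
    (hXp : ∀ i, Integrable (fun ω => |X i ω| ^ p) μ)
    (hiA : ∀ i, i ∈ A i) (hAB : ∀ i, A i ⊆ B i)
    (hLD1 : ∀ i, IndepFun (X i) (fun ω => fun j : ((A i)ᶜ : Finset ι) => X j.1 ω) μ)
    (hLD2 : ∀ i, IndepFun (fun ω => fun j : (A i : Finset ι) => X j.1 ω)
      (fun ω => fun j : ((B i)ᶜ : Finset ι) => X j.1 ω) μ)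
    (W : Ω → ℝ) (hW : ∀ ω, W ω = ∑ i, X i ω)
    (hWvar : ∫ ω, (W ω) ^ 2 ∂μ = 1)
    (Y : ι → Ω → ℝ) (hY : ∀ i ω, Y i ω = ∑ j ∈ A i, X j ω)
    (κ : ℕ)
    (hκ : ∀ i, (Finset.univ.filter fun j => (B j ∩ B i).Nonempty).card ≤ κ) :
    ∀ z : ℝ, |(μ {ω | W ω ≤ z}).toReal - stdGaussianCDF z| ≤
      (13 + 11 * (κ : ℝ)) *
        ∑ i, ((∫ ω, |X i ω| ^ (min 3 p) ∂μ) + ∫ ω, |Y i ω| ^ (min 3 p) ∂μ) +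
      2.5 * Real.sqrt ((κ : ℝ) *
        ∑ i, ((∫ ω, |X i ω| ^ p ∂μ) + ∫ ω, |Y i ω| ^ p ∂μ)) := by
  obtain rfl : Y = nbhdSum X A := funext₂ hY
  have hXq (i : ι) : Integrable (fun ω => |X i ω| ^ min 3 p) μ :=
    integrable_abs_rpow_of_le (hXmeas i).aestronglyMeasurable
      (lt_min three_pos (by linarith)) (min_le_right 3 p) (hXp i)
  exact stmt_1_general ⟨⟨hiA, hLD1⟩, hAB, hLD2⟩ hκ hXmeas hXmean
    (le_min (by norm_num) hp.1.le) (min_le_left 3 p) hXq hp.1.le hp.2 hXp hW hWvar
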